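/- arXiv:1206.2424 — 5 statements merged into one kernel-verified Lean document; each statement's English description precedes it below -/
import Mathlib

section
/- For every integer s ≥ 3, ∑_{j=2}^{s-1} ζ(j, s̄-j̄) = (1 - 2^{1-s}) ζ(s) + ζ(s̄-1̄, 1) + ζ(s̄-1̄, 1̄); explicitly, ∑_{j=2}^{s-1} ∑_{n=1}^∞ ∑_{m=1}^{n-1} (-1)^{m-1}/(n^j m^{s-j}) equals (1 - 2^{1-s}) ζ(s) plus ∑_{n=1}^∞ ∑_{m=1}^{n-1} (-1)^{n-1}/(n^{s-1} m) plus ∑_{n=1}^∞ ∑_{m=1}^{n-1} (-1)^{n-1}(-1)^{m-1}/(n^{s-1} m). -/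
open scoped BigOperators

/-!
Write `n = m + k` with `m, k ≥ 1`, so that every double sum runs freely over pairs `(m, k)`. Summing
the geometric progression in `j` and splitting into partial fractions gives
`∑_{j=2}^{s-1} 1 / (n^j m^{s-j}) = 1 / (m^{s-2} n k) - 1 / (n^{s-1} k)` (`geom_identity`).

With the sign `(-1)^(m-1)`, the second term sums to `-ζ(s̄-1̄, 1̄)` with the roles of `m` and `k`
exchanged, because `(-1)^(m-1) = -(-1)^(n-1) (-1)^(k-1)`. In the first term
`1 / (n k) = (1/k - 1/(m+k)) / m`, and the sum over `k` telescopes to `H_m / m`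
(`hasSum_harmonic`); splitting `H_m = H_{m-1} + 1/m` yields `ζ(s̄-1̄, 1)` and the alternating zeta
value `η(s) = (1 - 2^{1-s}) ζ(s)` (`eta_eq`).

All rearrangements are justified by absolute convergence: each double series involved is dominated
by `∑ 1 / (m k (m+k))`, which converges since `m + k ≥ √m √k` (`summable_bound`).
-/

/-- Riemann zeta value at a natural number `s ≥ 2`: `ζ(s) = ∑_{n≥1} 1/n^s`. -/
noncomputable def rzeta (s : ℕ) : ℝ := ∑' n : ℕ, 1 / (n : ℝ) ^ s

/-- Double zeta value `ζ(a,b) = ∑_{n≥1} ∑_{m=1}^{n-1} 1/(n^a m^b)`. -/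
noncomputable def dzeta (a b : ℕ) : ℝ :=
  ∑' n : ℕ, ∑ m ∈ Finset.Ioo 0 n, 1 / ((n : ℝ) ^ a * (m : ℝ) ^ b)

/-- Witten zeta function `W(r,s,t) = ∑_{n,m ≥ 1} 1/(n^r m^s (n+m)^t)`. -/
noncomputable def wzeta (r s t : ℕ) : ℝ :=
  ∑' n : ℕ+, ∑' m : ℕ+, 1 / ((n : ℝ) ^ r * (m : ℝ) ^ s * ((n : ℝ) + (m : ℝ)) ^ t)

/-- Alternating double zeta value `ζ(a, b̄)`. -/
noncomputable def dzetaAB (a b : ℕ) : ℝ :=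
  ∑' n : ℕ, ∑ m ∈ Finset.Ioo 0 n, (1 / (n : ℝ) ^ a) * ((-1 : ℝ) ^ (m - 1) / (m : ℝ) ^ b)

/-- Alternating double zeta value `ζ(ā, b)`. -/
noncomputable def dzetaBA (a b : ℕ) : ℝ :=
  ∑' n : ℕ, ∑ m ∈ Finset.Ioo 0 n, ((-1 : ℝ) ^ (n - 1) / (n : ℝ) ^ a) * (1 / (m : ℝ) ^ b)

/-- Doubly alternating double zeta value `ζ(ā, b̄)`. -/
noncomputable def dzetaBB (a b : ℕ) : ℝ :=
  ∑' n : ℕ, ∑ m ∈ Finset.Ioo 0 n,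
    ((-1 : ℝ) ^ (n - 1) / (n : ℝ) ^ a) * ((-1 : ℝ) ^ (m - 1) / (m : ℝ) ^ b)

/-- The `n`-th harmonic number `H_n = ∑_{k=1}^n 1/k` (with `H_0 = 0`). -/
noncomputable def H (n : ℕ) : ℝ := ∑ k ∈ Finset.Icc 1 n, 1 / (k : ℝ)

/-- The dominating series `∑ 1 / (m k (m + k))`, with `m = p.1 + 1` and `k = p.2 + 1`. -/
lemma summable_bound : Summable (fun p : ℕ × ℕ =>
    1 / (((p.1 : ℝ) + 1) * ((p.2 : ℝ) + 1) * ((p.1 : ℝ) + p.2 + 2))) := by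
  have h : Summable (fun n : ℕ => 1 / (((n : ℝ) + 1) * √((n : ℝ) + 1))) := by
    have h1 := (summable_nat_add_iff 1).2
      (Real.summable_one_div_nat_rpow (p := 3 / 2)|>.2 (by norm_num))
    refine h1.congr fun n => ?_
    have hn : (0 : ℝ) < (n : ℝ) + 1 := by positivity
    push_cast
    rw [show (3 / 2 : ℝ) = 1 + 1 / 2 by norm_num, Real.rpow_add hn, Real.rpow_one,
      Real.sqrt_eq_rpow]
  have h2 := h.mul_of_nonneg h (fun n => by positivity) (fun n => by positivity)
  refine Summable.of_nonneg_of_le (fun p => by positivity) (fun p => ?_) h2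
  rw [div_mul_div_comm, one_mul]
  have ha : (0 : ℝ) < (p.1 : ℝ) + 1 := by positivity
  have hb : (0 : ℝ) < (p.2 : ℝ) + 1 := by positivity
  have hle : √((p.1 : ℝ) + 1) * √((p.2 : ℝ) + 1) ≤ (p.1 : ℝ) + p.2 + 2 := by
    nlinarith [Real.sq_sqrt ha.le, Real.sq_sqrt hb.le,
      sq_nonneg (√((p.1 : ℝ) + 1) - √((p.2 : ℝ) + 1))]
  have hsa := Real.sqrt_pos.2 ha
  have hsb := Real.sqrt_pos.2 hb
  apply one_div_le_one_div_of_le (by positivity)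
  calc _ = (((p.1 : ℝ) + 1) * ((p.2 : ℝ) + 1)) * (√((p.1 : ℝ) + 1) * √((p.2 : ℝ) + 1)) := by ring
    _ ≤ _ := by gcongr

/-- Passage from the triangle `0 < m < n` to free pairs `(m, k)`, where `m = p.1 + 1` and
`n = m + k = p.1 + p.2 + 2`. -/
lemma hasSum_triangle (g : ℕ → ℕ → ℝ)
    (hg : Summable (fun p : ℕ × ℕ => g (p.1 + p.2 + 2) (p.1 + 1))) :
    HasSum (fun n : ℕ => ∑ m ∈ Finset.Ioo 0 n, g n m)
      (∑' p : ℕ × ℕ, g (p.1 + p.2 + 2) (p.1 + 1)) := by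
  have h1 := (Finset.HasAntidiagonal.sigmaAntidiagonalEquivProd (A := ℕ)).hasSum_iff.2 hg.hasSum
  have h2 := h1.sigma (fun n => hasSum_fintype _)
  have key : ∀ n : ℕ, ∑ m ∈ Finset.Ioo 0 (n + 2), g (n + 2) m
      = ∑ q : Finset.HasAntidiagonal.antidiagonal n, ((fun p : ℕ × ℕ => g (p.1 + p.2 + 2) (p.1 + 1)) ∘
        (Finset.HasAntidiagonal.sigmaAntidiagonalEquivProd (A := ℕ))) ⟨n, q⟩ := by
    intro n
    refine Eq.trans ?_ (Finset.sum_coe_sort (Finset.HasAntidiagonal.antidiagonal n)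
      (fun p : ℕ × ℕ => g (p.1 + p.2 + 2) (p.1 + 1))).symm
    rw [Finset.Nat.sum_antidiagonal_eq_sum_range_succ (fun i j => g (i + j + 2) (i + 1))]
    have : Finset.Ioo 0 (n + 2) = Finset.Ico 1 (n + 2) := by ext; simp; omega
    rw [this, Finset.sum_Ico_eq_sum_range]
    refine Finset.sum_congr (by congr 1) fun i hi => ?_
    simp only [Finset.mem_range] at hi
    congr 1 <;> omega
  rw [← hasSum_nat_add_iff' 2]
  simp only [key]
  have hempty : Finset.Ioo 0 1 = (∅ : Finset ℕ) := by decide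
  simpa [Finset.sum_range_succ, hempty] using h2

/-- Summation over `j` by geometric progression, with `s = t + 3`, `n = m + k`, and `j = i + 2`. -/
lemma geom_identity (t : ℕ) (m k : ℝ) (hm : 0 < m) (hk : 0 < k) :
    ∑ i ∈ Finset.range (t + 1), 1 / (m + k) ^ (i + 2) * (1 / m ^ (t + 1 - i))
      = 1 / (m ^ (t + 1) * (m + k) * k) - 1 / ((m + k) ^ (t + 2) * k) := by
  have hn : 0 < m + k := by positivity
  induction t with
  | zero => simp; field_simp; ring
  | succ t ih =>
    rw [Finset.sum_range_succ]
    have : ∀ i ∈ Finset.range (t + 1), 1 / (m + k) ^ (i + 2) * (1 / m ^ (t + 1 + 1 - i))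
        = (1 / (m + k) ^ (i + 2) * (1 / m ^ (t + 1 - i))) * (1 / m) := by
      intro i hi
      simp only [Finset.mem_range] at hi
      rw [show t + 1 + 1 - i = (t + 1 - i) + 1 by omega, pow_succ m]
      field_simp
    rw [Finset.sum_congr rfl this, ← Finset.sum_mul, ih]
    simp only [add_tsub_cancel_left]
    field_simp
    ring

lemma hasSum_telescope (m : ℕ) :
    HasSum (fun k : ℕ => 1 / ((k : ℝ) + 1 + m) - 1 / ((k : ℝ) + 1 + (m + 1))) (1 / ((m : ℝ) + 1)) := by
  rw [hasSum_iff_tendsto_nat_of_nonneg]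
  · have h : ∀ n : ℕ, ∑ k ∈ Finset.range n,
        (1 / ((k : ℝ) + 1 + m) - 1 / ((k : ℝ) + 1 + (m + 1)))
        = 1 / ((m : ℝ) + 1) - 1 / (((n + m : ℕ) : ℝ) + 1) := by
      intro n
      have := Finset.sum_range_sub' (fun k : ℕ => 1 / ((k : ℝ) + 1 + m)) n
      push_cast at this ⊢
      rw [show (m : ℝ) + 1 = 0 + 1 + m by ring, show (n : ℝ) + m + 1 = n + 1 + m by ring, ← this]
      refine Finset.sum_congr rfl fun k _ => ?_
      congr 2
      ring
    simp only [h]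
    have h0 := (Filter.tendsto_add_atTop_iff_nat m).2
      (tendsto_one_div_add_atTop_nhds_zero_nat (𝕜 := ℝ))
    simpa using tendsto_const_nhds.sub h0
  · intro k
    rw [sub_nonneg]
    apply one_div_le_one_div_of_le <;> [positivity; linarith]

lemma hasSum_harmonic (m : ℕ) :
    HasSum (fun k : ℕ => 1 / ((k : ℝ) + 1) - 1 / ((k : ℝ) + 1 + m))
      (∑ i ∈ Finset.range m, 1 / ((i : ℝ) + 1)) := by
  induction m with
  | zero => simp
  | succ m ih =>
    rw [Finset.sum_range_succ]
    refine (ih.add (hasSum_telescope m)).congr_fun ?_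
    intro k
    push_cast
    ring

/-- `η(s) = (1 - 2^{1-s}) ζ(s)` for `s = t + 3`, the sum being indexed by `n + 1`. -/
lemma eta_eq (t : ℕ) :
    HasSum (fun n : ℕ => (-1 : ℝ) ^ n / ((n : ℝ) + 1) ^ (t + 3))
      ((1 - (2 : ℝ) ^ (1 - ((t + 3 : ℕ) : ℤ))) * rzeta (t + 3)) := by
  have hz : Summable (fun n : ℕ => 1 / (n : ℝ) ^ (t + 3)) :=
    Real.summable_one_div_nat_pow.2 (by omega)
  have hZ : HasSum (fun n : ℕ => 1 / (n : ℝ) ^ (t + 3)) (rzeta (t + 3)) := hz.hasSum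
  -- The even-indexed terms carry `2^{-s}` of the total, and `η` is the total minus twice these.
  have he : HasSum (fun n : ℕ => 1 / ((2 * n : ℕ) : ℝ) ^ (t + 3))
      (1 / 2 ^ (t + 3) * rzeta (t + 3)) := by
    refine (hZ.mul_left (1 / 2 ^ (t + 3))).congr_fun fun n => ?_
    push_cast
    rw [mul_pow, div_mul_div_comm, one_mul]
  have ho : Summable (fun n : ℕ => 1 / ((2 * n + 1 : ℕ) : ℝ) ^ (t + 3)) :=
    hz.comp_injective (i := fun n : ℕ => 2 * n + 1) (fun a b h => by simpa using h)
  have hsum := (he.even_add_odd (f := fun n : ℕ => 1 / (n : ℝ) ^ (t + 3)) ho.hasSum).unique hZ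
  have h1 : HasSum (fun n : ℕ => -(-1 : ℝ) ^ n / (n : ℝ) ^ (t + 3))
      (-(1 / 2 ^ (t + 3) * rzeta (t + 3)) + ∑' n : ℕ, 1 / ((2 * n + 1 : ℕ) : ℝ) ^ (t + 3)) := by
    apply HasSum.even_add_odd
    · refine he.neg.congr_fun fun n => ?_
      simp [pow_mul, neg_div]
    · refine ho.hasSum.congr_fun fun n => ?_
      simp [pow_succ, pow_mul]
  have h2 := (hasSum_nat_add_iff' 1).2 h1
  have hv : (1 - (2 : ℝ) ^ (1 - ((t + 3 : ℕ) : ℤ))) * rzeta (t + 3)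
      = (-(1 / 2 ^ (t + 3) * rzeta (t + 3)) + ∑' n : ℕ, 1 / ((2 * n + 1 : ℕ) : ℝ) ^ (t + 3))
        - ∑ i ∈ Finset.range 1, -(-1 : ℝ) ^ i / (i : ℝ) ^ (t + 3) := by
    have hp : (2 : ℝ) ^ (1 - ((t + 3 : ℕ) : ℤ)) = 2 * (1 / 2 ^ (t + 3)) := by
      rw [zpow_sub₀ (by norm_num), zpow_natCast, zpow_one]; ring
    rw [hp, Finset.sum_range_one]
    simp only [Nat.cast_zero, ne_eq, Nat.add_eq_zero_iff, OfNat.ofNat_ne_zero, and_false,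
      not_false_eq_true, zero_pow, div_zero, sub_zero]
    linarith
  rw [hv]
  refine h2.congr_fun fun n => ?_
  push_cast
  rw [pow_succ]
  ring

/-- Absolute convergence of a double series dominated by `∑ 1 / (m k (m + k))`. -/
lemma summable_of_bound (f : ℕ × ℕ → ℝ)
    (h : ∀ p : ℕ × ℕ, |f p| ≤
      1 / (((p.1 : ℝ) + 1) * ((p.2 : ℝ) + 1) * ((p.1 : ℝ) + p.2 + 2))) : Summable f :=
  Summable.of_norm_bounded summable_bound h

lemma abs_sign_div_le (σ D B : ℝ) (hσ : |σ| = 1) (hB : 0 < B) (h : B ≤ D) :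
    |σ / D| ≤ 1 / B := by
  rw [abs_div, hσ, abs_of_pos (hB.trans_le h)]
  exact one_div_le_one_div_of_le hB h

theorem stmt15 (s : ℕ) (hs : 3 ≤ s) :
    ∑ j ∈ Finset.Icc 2 (s - 1), dzetaAB j (s - j)
      = (1 - (2 : ℝ) ^ (1 - (s : ℤ))) * rzeta s + dzetaBA (s - 1) 1 + dzetaBB (s - 1) 1 := by
  obtain ⟨t, rfl⟩ : ∃ t, s = t + 3 := ⟨s - 3, by omega⟩
  have hsgn : ∀ a : ℕ, |(-1 : ℝ) ^ a| = 1 := fun a => by simp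
  -- Left-hand side, term by term in `j = i + 2`.
  have hABs : ∀ i ∈ Finset.range (t + 1), Summable (fun p : ℕ × ℕ =>
      (1 / ((p.1 + p.2 + 2 : ℕ) : ℝ) ^ (i + 2)) *
        ((-1 : ℝ) ^ (p.1 + 1 - 1) / ((p.1 + 1 : ℕ) : ℝ) ^ (t + 1 - i))) := by
    intro i hi
    simp only [Finset.mem_range] at hi
    refine summable_of_bound _ fun p => ?_
    rw [div_mul_div_comm, one_mul]
    apply abs_sign_div_le _ _ _ (hsgn _) (by positivity)
    push_cast
    have hm : (1 : ℝ) ≤ (p.1 : ℝ) + 1 := by simp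
    have hn : (1 : ℝ) ≤ (p.1 : ℝ) + p.2 + 2 := by
      have : (0 : ℝ) ≤ (p.1 : ℝ) + p.2 := by positivity
      linarith
    calc ((p.1 : ℝ) + 1) * ((p.2 : ℝ) + 1) * ((p.1 : ℝ) + p.2 + 2)
        ≤ ((p.1 : ℝ) + 1) * ((p.1 : ℝ) + p.2 + 2) * ((p.1 : ℝ) + p.2 + 2) := by
          gcongr ?_ * ?_ * _
          linarith
      _ = ((p.1 : ℝ) + p.2 + 2) ^ 2 * ((p.1 : ℝ) + 1) ^ 1 := by ring
      _ ≤ _ := by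
          gcongr
          all_goals first | exact hn | exact hm | omega
  have hL : ∑ j ∈ Finset.Icc 2 (t + 3 - 1), dzetaAB j (t + 3 - j)
      = ∑' p : ℕ × ℕ, ∑ i ∈ Finset.range (t + 1),
        (1 / ((p.1 + p.2 + 2 : ℕ) : ℝ) ^ (i + 2)) *
        ((-1 : ℝ) ^ (p.1 + 1 - 1) / ((p.1 + 1 : ℕ) : ℝ) ^ (t + 1 - i)) := by
    rw [Summable.tsum_finsetSum hABs]
    have : Finset.Icc 2 (t + 3 - 1) = Finset.Ico 2 (t + 3) := by ext; simp; omega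
    rw [this, Finset.sum_Ico_eq_sum_range]
    refine Finset.sum_congr (by congr 1) fun i hi => ?_
    rw [show t + 3 - (2 + i) = t + 1 - i by omega, add_comm 2 i]
    exact (hasSum_triangle (fun n m =>
      (1 / (n : ℝ) ^ (i + 2)) * ((-1 : ℝ) ^ (m - 1) / (m : ℝ) ^ (t + 1 - i))) (hABs i hi)).tsum_eq
  -- The two terms of the partial fraction decomposition.
  set F : ℕ × ℕ → ℝ := fun p => (-1 : ℝ) ^ p.1 /
    (((p.1 : ℝ) + 1) ^ (t + 1) * ((p.1 : ℝ) + p.2 + 2) * ((p.2 : ℝ) + 1)) with hF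
  set K : ℕ × ℕ → ℝ := fun p => (-1 : ℝ) ^ p.1 /
    (((p.1 : ℝ) + p.2 + 2) ^ (t + 2) * ((p.2 : ℝ) + 1)) with hK
  have hFs : Summable F := by
    refine summable_of_bound _ fun p => ?_
    apply abs_sign_div_le _ _ _ (hsgn _) (by positivity)
    have hm : (1 : ℝ) ≤ (p.1 : ℝ) + 1 := by simp
    calc _ = ((p.1 : ℝ) + 1) ^ 1 * ((p.1 : ℝ) + p.2 + 2) * ((p.2 : ℝ) + 1) := by ring
      _ ≤ _ := by
        gcongr
        all_goals first | exact hm | omega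
  have hn1 : ∀ p : ℕ × ℕ, (1 : ℝ) ≤ (p.1 : ℝ) + p.2 + 2 := fun p => by
    have : (0 : ℝ) ≤ (p.1 : ℝ) + p.2 := by positivity
    linarith
  have hKb : ∀ p : ℕ × ℕ, ((p.1 : ℝ) + 1) * ((p.2 : ℝ) + 1) * ((p.1 : ℝ) + p.2 + 2) ≤
      ((p.1 : ℝ) + p.2 + 2) ^ (t + 2) * ((p.2 : ℝ) + 1) := by
    intro p
    calc ((p.1 : ℝ) + 1) * ((p.2 : ℝ) + 1) * ((p.1 : ℝ) + p.2 + 2)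
        ≤ ((p.1 : ℝ) + p.2 + 2) * ((p.2 : ℝ) + 1) * ((p.1 : ℝ) + p.2 + 2) := by
          gcongr ?_ * _ * _
          have : (0 : ℝ) ≤ p.2 := by positivity
          linarith
      _ = ((p.1 : ℝ) + p.2 + 2) ^ 2 * ((p.2 : ℝ) + 1) := by ring
      _ ≤ _ := by
          gcongr
          · exact hn1 p
          · omega
  have hKs : Summable K := by
    refine summable_of_bound _ fun p => ?_
    exact abs_sign_div_le _ _ _ (hsgn _) (by positivity) (hKb p)
  have hsplit : ∑ j ∈ Finset.Icc 2 (t + 3 - 1), dzetaAB j (t + 3 - j) = ∑' p, F p - ∑' p, K p := by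
    rw [hL, ← hFs.tsum_sub hKs]
    refine tsum_congr fun p => ?_
    have hg := geom_identity t ((p.1 : ℝ) + 1) ((p.2 : ℝ) + 1) (by positivity) (by positivity)
    rw [show (p.1 : ℝ) + 1 + (p.2 + 1) = (p.1 : ℝ) + p.2 + 2 by ring] at hg
    have : F p - K p = (-1 : ℝ) ^ p.1 * (1 / (((p.1 : ℝ) + 1) ^ (t + 1) *
        ((p.1 : ℝ) + p.2 + 2) * ((p.2 : ℝ) + 1))
        - 1 / (((p.1 : ℝ) + p.2 + 2) ^ (t + 2) * ((p.2 : ℝ) + 1))) := by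
      simp only [hF, hK]; ring
    rw [this, ← hg, Finset.mul_sum]
    refine Finset.sum_congr rfl fun i _ => ?_
    push_cast
    ring
  -- The second term is `-ζ(s̄-1̄, 1̄)` after exchanging `m` and `k`.
  have hBB : dzetaBB (t + 3 - 1) 1 = - ∑' p, K p := by
    have hpt : ∀ p : ℕ × ℕ, ((-1 : ℝ) ^ (p.1 + p.2 + 2 - 1) / ((p.1 + p.2 + 2 : ℕ) : ℝ) ^ (t + 2)) *
        ((-1 : ℝ) ^ (p.1 + 1 - 1) / ((p.1 + 1 : ℕ) : ℝ) ^ 1) = - K p.swap := by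
      intro p
      have h1 : (-1 : ℝ) ^ p.1 * (-1 : ℝ) ^ p.1 = 1 := by
        rw [← mul_pow]; simp
      have h2 : (-1 : ℝ) ^ (p.1 + p.2 + 2 - 1) * (-1 : ℝ) ^ (p.1 + 1 - 1) = -(-1 : ℝ) ^ p.2 := by
        rw [show p.1 + p.2 + 2 - 1 = p.1 + p.2 + 1 by omega, Nat.add_sub_cancel, pow_succ, pow_add]
        linear_combination (-(-1 : ℝ) ^ p.2) * h1
      rw [div_mul_div_comm, h2]
      simp only [hK, Prod.fst_swap, Prod.snd_swap]
      push_cast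
      rw [neg_div, add_comm (p.2 : ℝ) p.1, pow_one]
    have hsw : Summable (fun p : ℕ × ℕ => - K p.swap) :=
      ((Equiv.prodComm ℕ ℕ).summable_iff.2 hKs).neg
    have h := (hasSum_triangle (fun n m => ((-1 : ℝ) ^ (n - 1) / (n : ℝ) ^ (t + 2)) *
      ((-1 : ℝ) ^ (m - 1) / (m : ℝ) ^ 1)) (hsw.congr fun p => (hpt p).symm)).tsum_eq
    rw [tsum_congr hpt, tsum_neg] at h
    rw [← (Equiv.prodComm ℕ ℕ).tsum_eq K]
    exact h
  -- `ζ(s̄-1̄, 1)`, with the outer sum shifted to `n + 1`.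
  have hBA : HasSum (fun n : ℕ => ((-1 : ℝ) ^ n / ((n : ℝ) + 1) ^ (t + 2)) *
      ∑ i ∈ Finset.range n, 1 / ((i : ℝ) + 1)) (dzetaBA (t + 3 - 1) 1) := by
    have hsum : Summable (fun p : ℕ × ℕ =>
        ((-1 : ℝ) ^ (p.1 + p.2 + 2 - 1) / ((p.1 + p.2 + 2 : ℕ) : ℝ) ^ (t + 2)) *
        (1 / ((p.1 + 1 : ℕ) : ℝ) ^ 1)) := by
      refine summable_of_bound _ fun p => ?_
      rw [div_mul_div_comm, mul_one]
      apply abs_sign_div_le _ _ _ (hsgn _) (by positivity)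
      have := hKb p.swap
      simp only [Prod.fst_swap, Prod.snd_swap] at this
      push_cast
      rw [pow_one, add_comm (p.1 : ℝ) p.2]
      linarith
    have h := hasSum_triangle (fun n m => ((-1 : ℝ) ^ (n - 1) / (n : ℝ) ^ (t + 2)) *
      (1 / (m : ℝ) ^ 1)) hsum
    have h' := (hasSum_nat_add_iff' 1).2 h.summable.hasSum
    have hval : dzetaBA (t + 3 - 1) 1 = ∑' n : ℕ, ∑ m ∈ Finset.Ioo 0 n,
      ((-1 : ℝ) ^ (n - 1) / (n : ℝ) ^ (t + 2)) * (1 / (m : ℝ) ^ 1) := rfl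
    rw [hval]
    simp only [Finset.sum_range_one, Finset.Ioo_self, Finset.sum_empty, sub_zero] at h'
    refine h'.congr_fun fun n => ?_
    have : Finset.Ioo 0 (n + 1) = Finset.Ico 1 (n + 1) := by ext; simp; omega
    rw [this, Finset.sum_Ico_eq_sum_range, Finset.mul_sum]
    refine Finset.sum_congr (by congr 1) fun i _ => ?_
    push_cast
    rw [pow_one, add_comm (1 : ℝ) i]
  -- The first term: the inner sum over `k` telescopes to a harmonic number.
  have hFv : HasSum (fun m : ℕ => ((-1 : ℝ) ^ m / ((m : ℝ) + 1) ^ (t + 2)) *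
      ∑ i ∈ Finset.range (m + 1), 1 / ((i : ℝ) + 1)) (∑' p, F p) := by
    refine hFs.hasSum.prod_fiberwise fun m => ?_
    refine ((hasSum_harmonic (m + 1)).mul_left
      ((-1 : ℝ) ^ m / ((m : ℝ) + 1) ^ (t + 2))).congr_fun fun k => ?_
    have h1 : (0 : ℝ) < (m : ℝ) + 1 := by positivity
    have h2 : (0 : ℝ) < (k : ℝ) + 1 := by positivity
    have h3 : (0 : ℝ) < (m : ℝ) + k + 2 := by positivity
    simp only [hF]
    push_cast
    rw [show (k : ℝ) + 1 + (m + 1) = (m : ℝ) + k + 2 by ring]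
    field_simp
    ring
  have hFsum : ∑' p, F p = (1 - (2 : ℝ) ^ (1 - ((t + 3 : ℕ) : ℤ))) * rzeta (t + 3)
      + dzetaBA (t + 3 - 1) 1 := by
    refine hFv.unique (((eta_eq t).add hBA).congr_fun fun m => ?_)
    rw [Finset.sum_range_succ]
    have h1 : (0 : ℝ) < (m : ℝ) + 1 := by positivity
    field_simp
    ring
  rw [hsplit, hFsum, hBB, sub_eq_add_neg]
end

section
/- For every integer s ≥ 2, ∑_{j=1}^{s-1} ζ(2j+1, (2s-2j)‾) = ((2s-1)/4 - (s+1)/2^{2s+1}) ζ(2s+1) - ∑_{k=1}^{s-1} (1/2 - 4^{-k}) ζ(2k) ζ(2s+1-2k), where ζ(2j+1, (2s-2j)‾) = ∑_{n=1}^∞ ∑_{m=1}^{n-1} (1/n^{2j+1})·((-1)^{m-1}/m^{2s-2j}). -/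
/-!
The idea is to evaluate `∑_j (2 ζ(2j+1, (2s-2j)‾) + η(2s-2j) ζ(2j+1))`, where
`η(b) = ∑ (-1)^{m-1} / m^b = (1 - 2^{1-b}) ζ(b)`. This is the double series over all `m, n ≥ 1` of
`w(m,n) (-1)^{m-1} ∑_j m^{-(2s-2j)} n^{-(2j+1)}`, with weight `w = 3` for `m < n` and `w = 1` otherwise
(`hasSum_wt_double`).

For `m ≠ n` the inner sum over `j` is geometric and equals
`m^{2-2s} / (n (n² - m²)) - n^{1-2s} / (n² - m²)`, while the diagonal contributes `(s-1) η(2s+1)`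
(`geom_collapse`). Both pieces are absolutely summable over pairs, because
`1 / |n² - m²| ≤ 1 / (n - m)²`. The first piece is summed over `n` with `m` fixed (`hasSum_wt_right`),
the second over `m` with `n` fixed (`hasSum_wt_left`). Each fibre sum telescopes by partial fractions
to an expression in `H_m - H_{2m}`, and these harmonic numbers cancel (`fiber_combine`). What remains is
`(s+1) η(2s+1) - (3/2) ζ(2s+1)`, and solving for the double zeta values gives the formula.

In the auxiliary lemmas all indices are shifted by one: `m, n : ℕ` stand for `m + 1, n + 1`.
-/

open scoped BigOperators

/-! ### Harmonic numbers and telescoping series -/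

/-- The harmonic number `1 + 1/2 + ⋯ + 1/n`, indexed from `0` for use with `Finset.range`. -/
noncomputable def harm (n : ℕ) : ℝ := ∑ k ∈ Finset.range n, 1 / ((k : ℝ) + 1)

/-- The weight on pairs of indices: `3` below the diagonal `m < n`, and `1` elsewhere. -/
noncomputable def wt (m n : ℕ) : ℝ := if m < n then 3 else 1

lemma harm_succ (n : ℕ) : harm (n + 1) = harm n + 1 / ((n : ℝ) + 1) := by
  simp [harm, Finset.sum_range_succ]

/-- Partial sums of the alternating harmonic series: `1 - 1/2 + ⋯ - 1/(2p) = H_{2p} - H_p`. -/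
lemma alt_harm (p : ℕ) : ∑ k ∈ Finset.range (2 * p), (-1 : ℝ) ^ k / ((k : ℝ) + 1)
    = harm (2 * p) - harm p := by
  induction p with
  | zero => simp [harm]
  | succ q ih =>
    rw [show 2 * (q + 1) = 2 * q + 1 + 1 by ring]
    simp only [Finset.sum_range_succ, ih, harm_succ]
    rw [pow_succ, pow_mul]
    push_cast
    field_simp
    ring

lemma hasSum_of_eq {ι : Type*} {f g : ι → ℝ} {a b : ℝ} (h : HasSum g b) (hf : ∀ k, f k = g k)
    (hab : a = b) : HasSum f a := by
  rw [funext hf, hab]; exact h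

lemma telescope_tendsto (c : ℕ → ℝ) (hc : Filter.Tendsto c Filter.atTop (nhds 0)) (p : ℕ) :
    Filter.Tendsto (fun K => ∑ k ∈ Finset.range K, (c k - c (k + p))) Filter.atTop
      (nhds (∑ k ∈ Finset.range p, c k)) := by
  have h1 : ∀ K, ∑ k ∈ Finset.range K, (c k - c (k + p))
      = ∑ k ∈ Finset.range p, c k - ∑ k ∈ Finset.range p, c (K + k) := by
    intro K
    have e1 := Finset.sum_range_add c K p
    have e2 := Finset.sum_range_add c p K
    rw [Finset.sum_sub_distrib]
    rw [add_comm p K] at e2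
    simp only [add_comm p] at e2
    linarith
  simp only [h1]
  have h2 : Filter.Tendsto (fun K => ∑ k ∈ Finset.range p, c (K + k)) Filter.atTop
      (nhds (∑ k ∈ Finset.range p, (0 : ℝ))) :=
    tendsto_finsetSum _ fun k _ => hc.comp (Filter.tendsto_add_atTop_nat k)
  simpa using tendsto_const_nhds.sub h2

lemma hasSum_harm (p : ℕ) :
    HasSum (fun k : ℕ => 1 / ((k : ℝ) + 1) - 1 / ((k : ℝ) + p + 1)) (harm p) := by
  rw [hasSum_iff_tendsto_nat_of_nonneg]
  · have := telescope_tendsto (fun k : ℕ => 1 / ((k : ℝ) + 1)) tendsto_one_div_add_atTop_nhds_zero_nat p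
    simpa [harm] using this
  · intro k
    rw [sub_nonneg]
    apply one_div_le_one_div_of_le <;> [positivity; skip]
    have : (0 : ℝ) ≤ p := by positivity
    linarith

/-- The shift `2 * p` is even, so the signs of the two terms agree and the series telescopes. -/
lemma hasSum_alt (p : ℕ) :
    HasSum (fun k : ℕ => (-1 : ℝ) ^ k * (1 / ((k : ℝ) + 1) - 1 / ((k : ℝ) + (2 * p : ℕ) + 1)))
      (harm (2 * p) - harm p) := by
  have hs : Summable
      (fun k : ℕ => (-1 : ℝ) ^ k * (1 / ((k : ℝ) + 1) - 1 / ((k : ℝ) + (2 * p : ℕ) + 1))) := by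
    refine Summable.of_norm ?_
    have := (hasSum_harm (2 * p)).summable.norm
    simpa [norm_mul] using this
  have h0 : Filter.Tendsto (fun k : ℕ => (-1 : ℝ) ^ k / ((k : ℝ) + 1)) Filter.atTop (nhds 0) := by
    rw [tendsto_zero_iff_norm_tendsto_zero]
    refine (tendsto_one_div_add_atTop_nhds_zero_nat (𝕜 := ℝ)).congr fun k => ?_
    rw [norm_div, norm_pow, norm_neg, norm_one, one_pow, Real.norm_of_nonneg (by positivity)]
  have ht := telescope_tendsto _ h0 (2 * p)
  rw [alt_harm] at ht
  refine (hs.hasSum_iff_tendsto_nat).2 (ht.congr fun K => Finset.sum_congr rfl fun k _ => ?_)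
  rw [pow_add, pow_mul]
  push_cast
  ring

/-! ### Fibre sums -/

lemma sum_harm_shift (a b : ℕ) :
    ∑ i ∈ Finset.range b, 1 / ((a : ℝ) + i + 1) = harm (a + b) - harm a := by
  have := Finset.sum_range_add (fun k : ℕ => 1 / ((k : ℝ) + 1)) a b
  simp only [Nat.cast_add] at this
  unfold harm
  linarith

lemma sum_harm_reflect (M : ℕ) :
    ∑ i ∈ Finset.range M, 1 / ((M : ℝ) - i) = harm M := by
  rw [harm, ← Finset.sum_range_reflect]
  refine Finset.sum_congr rfl fun i hi => ?_
  have : i < M := Finset.mem_range.1 hi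
  rw [show M - 1 - i = M - (i + 1) by omega, Nat.cast_sub (by omega)]
  push_cast
  congr 1
  ring

/-- The denominators `M - i` and `M + i + 2` run through `1, …, 2M + 1` without `M + 1`, so the sum is an
alternating harmonic sum with its middle term removed. -/
lemma sum_alt_both (M : ℕ) :
    ∑ i ∈ Finset.range M, (-1 : ℝ) ^ i * (1 / ((M : ℝ) - i) + 1 / ((M : ℝ) + i + 2))
      = (-1 : ℝ) ^ M * (harm (M + 1) - harm (2 * (M + 1)) - 1 / (2 * ((M : ℝ) + 1)))
        + 1 / ((M : ℝ) + 1) := by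
  have h := alt_harm (M + 1)
  rw [show 2 * (M + 1) = M + 1 + M + 1 by ring, Finset.sum_range_succ, Finset.sum_range_add,
    Finset.sum_range_succ, ← Finset.sum_range_reflect] at h
  have hsq : ((-1 : ℝ) ^ M) * (-1) ^ M = 1 := by rw [← mul_pow]; simp
  have e1 : ∑ i ∈ Finset.range M, (-1 : ℝ) ^ i * (1 / ((M : ℝ) - i))
      = -(-1) ^ M * ∑ j ∈ Finset.range M, (-1 : ℝ) ^ (M - 1 - j) / (((M - 1 - j : ℕ) : ℝ) + 1) := by
    rw [Finset.mul_sum]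
    refine Finset.sum_congr rfl fun i hi => ?_
    have hi' : i < M := Finset.mem_range.1 hi
    obtain ⟨r, rfl⟩ : ∃ r, M = i + r + 1 := ⟨M - i - 1, by omega⟩
    have hr : ((-1 : ℝ) ^ r) * (-1) ^ r = 1 := by rw [← mul_pow]; simp
    rw [show i + r + 1 - 1 - i = r by omega, pow_add, pow_add]
    push_cast
    rw [show (i : ℝ) + r + 1 - i = r + 1 by ring]
    linear_combination (-(-1 : ℝ) ^ i / ((r : ℝ) + 1)) * hr
  have e2 : ∑ i ∈ Finset.range M, (-1 : ℝ) ^ i * (1 / ((M : ℝ) + i + 2))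
      = -(-1) ^ M * ∑ j ∈ Finset.range M, (-1 : ℝ) ^ (M + 1 + j) / (((M + 1 + j : ℕ) : ℝ) + 1) := by
    rw [Finset.mul_sum]
    refine Finset.sum_congr rfl fun i hi => ?_
    rw [pow_add, pow_add]
    push_cast
    rw [show (M : ℝ) + 1 + i + 1 = M + i + 2 by ring]
    linear_combination (-(-1 : ℝ) ^ i / ((M : ℝ) + i + 2)) * hsq
  have e0 : ∀ i ∈ Finset.range M,
      (-1 : ℝ) ^ i * (1 / ((M : ℝ) - i) + 1 / ((M : ℝ) + i + 2))
        = (-1 : ℝ) ^ i * (1 / ((M : ℝ) - i)) + (-1 : ℝ) ^ i * (1 / ((M : ℝ) + i + 2)) :=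
    fun i _ => mul_add _ _ _
  rw [Finset.sum_congr rfl e0, Finset.sum_add_distrib, e1, e2]
  rw [show 2 * (M + 1) = M + 1 + M + 1 by ring]
  have hl : (-1 : ℝ) ^ (M + 1 + M) = -1 := by
    rw [pow_add, pow_add]; linear_combination (-1) * hsq
  rw [hl] at h
  push_cast at h ⊢
  have e3 : (-1 : ℝ) / ((M : ℝ) + 1 + M + 1) = - (1 / (2 * ((M : ℝ) + 1))) := by
    rw [show (M : ℝ) + 1 + M + 1 = 2 * (M + 1) by ring]; ring
  rw [e3] at h
  linear_combination (-(-1 : ℝ) ^ M) * h + (1 / ((M : ℝ) + 1)) * hsq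

/-- Sum over `n` with `m` fixed, by partial fractions of `1 / (n (n² - m²))`. The term `n = m` is
`0` since it divides by zero. -/
lemma hasSum_wt_right (m : ℕ) :
    HasSum (fun n : ℕ => wt m n / (((n : ℝ) + 1) * (((n : ℝ) + 1) ^ 2 - ((m : ℝ) + 1) ^ 2)))
      ((harm (m + 1) - harm (2 * (m + 1)) + 5 / (4 * ((m : ℝ) + 1))) / ((m : ℝ) + 1) ^ 2) := by
  have hx : (0 : ℝ) < (m : ℝ) + 1 := by positivity
  have hT := ((((hasSum_harm (m + 1)).mul_left 2).sub (hasSum_harm (2 * (m + 1)))).mul_left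
    (3 / (2 * ((m : ℝ) + 1) ^ 2)))
  have hfin : ∑ i ∈ Finset.range (m + 1),
      wt m i / (((i : ℝ) + 1) * (((i : ℝ) + 1) ^ 2 - ((m : ℝ) + 1) ^ 2))
      = 1 / (2 * ((m : ℝ) + 1) ^ 2) * (-harm m + (harm (m + 1 + m) - harm (m + 1)) - 2 * harm m) := by
    rw [Finset.sum_range_succ, ← sum_harm_shift]
    nth_rewrite 1 [← sum_harm_reflect]
    simp only [sub_self, mul_zero, div_zero, add_zero]
    rw [harm, Finset.mul_sum, ← Finset.sum_neg_distrib, ← Finset.sum_add_distrib,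
      ← Finset.sum_sub_distrib, Finset.mul_sum]
    refine Finset.sum_congr rfl fun i hi => ?_
    have hi' : i < m := Finset.mem_range.1 hi
    have h1 : (0 : ℝ) < (m : ℝ) - i := by
      rw [sub_pos]; exact_mod_cast hi'
    have h2 : ((i : ℝ) + 1) ^ 2 - ((m : ℝ) + 1) ^ 2 = -(((m : ℝ) - i) * (m + 1 + i + 1)) := by ring
    rw [h2, wt, if_neg (by omega)]
    push_cast
    field_simp
    ring
  refine (hasSum_nat_add_iff' (m + 1)).1 ?_
  rw [hfin]
  refine hasSum_of_eq hT (fun k => ?_) ?_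
  · have h2 : (((k + (m + 1) : ℕ) : ℝ) + 1) ^ 2 - ((m : ℝ) + 1) ^ 2
        = (((k : ℝ) + 1) * (k + 2 * (m + 1) + 1)) := by push_cast; ring
    rw [h2, wt, if_pos (by omega)]
    push_cast
    field_simp
    ring
  · rw [show 2 * (m + 1) = m + 1 + m + 1 by ring, harm_succ (m + 1 + m), harm_succ m]
    push_cast
    rw [show (m : ℝ) + 1 + m + 1 = 2 * (m + 1) by ring]
    field_simp
    ring

/-- Sum over `m` with `n` fixed, by partial fractions of `1 / (n² - m²)`. The term `m = n` is `0`
since it divides by zero. -/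
lemma hasSum_wt_left (n : ℕ) :
    HasSum (fun m : ℕ => wt m n * (-1 : ℝ) ^ m / (((n : ℝ) + 1) ^ 2 - ((m : ℝ) + 1) ^ 2))
      (1 / ((n : ℝ) + 1) * ((-1 : ℝ) ^ n *
        (harm (n + 1) - harm (2 * (n + 1)) - 3 / (4 * ((n : ℝ) + 1))) + 3 / (2 * ((n : ℝ) + 1)))) := by
  have hx : (0 : ℝ) < (n : ℝ) + 1 := by positivity
  have hT := (hasSum_alt (n + 1)).mul_left (1 / (2 * ((n : ℝ) + 1)) * (-1) ^ n)
  have hfin : ∑ i ∈ Finset.range (n + 1),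
      wt i n * (-1 : ℝ) ^ i / (((n : ℝ) + 1) ^ 2 - ((i : ℝ) + 1) ^ 2)
      = 3 / (2 * ((n : ℝ) + 1)) *
        ((-1 : ℝ) ^ n * (harm (n + 1) - harm (2 * (n + 1)) - 1 / (2 * ((n : ℝ) + 1)))
        + 1 / ((n : ℝ) + 1)) := by
    rw [Finset.sum_range_succ, ← sum_alt_both]
    simp only [sub_self, div_zero, add_zero]
    rw [Finset.mul_sum]
    refine Finset.sum_congr rfl fun i hi => ?_
    have hi' : i < n := Finset.mem_range.1 hi
    have h1 : (0 : ℝ) < (n : ℝ) - i := by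
      rw [sub_pos]; exact_mod_cast hi'
    have h2 : ((n : ℝ) + 1) ^ 2 - ((i : ℝ) + 1) ^ 2 = (((n : ℝ) - i) * (n + i + 2)) := by ring
    rw [h2, wt, if_pos hi']
    field_simp
    ring
  refine (hasSum_nat_add_iff' (n + 1)).1 ?_
  rw [hfin]
  refine hasSum_of_eq hT (fun k => ?_) ?_
  · have h2 : ((n : ℝ) + 1) ^ 2 - (((k + (n + 1) : ℕ) : ℝ) + 1) ^ 2
        = -(((k : ℝ) + 1) * (k + 2 * (n + 1) + 1)) := by push_cast; ring
    rw [h2, wt, if_neg (by omega), pow_add, pow_add]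
    push_cast
    field_simp
    ring
  · field_simp
    ring

/-! ### Zeta and eta values, absolute summability -/

lemma summable_shift {a : ℕ} (ha : 2 ≤ a) : Summable (fun n : ℕ => 1 / ((n : ℝ) + 1) ^ a) := by
  have := (summable_nat_add_iff 1).2 (Real.summable_one_div_nat_pow.2 (show 1 < a by omega))
  simpa using this

lemma summable_alt_shift {a : ℕ} (ha : 2 ≤ a) :
    Summable (fun n : ℕ => (-1 : ℝ) ^ n / ((n : ℝ) + 1) ^ a) := by
  refine Summable.of_norm ((summable_shift ha).congr fun n => ?_)
  rw [norm_div, norm_pow, norm_neg, norm_one, one_pow, Real.norm_of_nonneg (by positivity)]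

lemma hasSum_rzeta {a : ℕ} (ha : 2 ≤ a) :
    HasSum (fun n : ℕ => 1 / ((n : ℝ) + 1) ^ a) (rzeta a) := by
  have h := (Real.summable_one_div_nat_pow.2 (show 1 < a by omega)).hasSum
  have := (hasSum_nat_add_iff' 1).2 h
  simpa [rzeta, show a ≠ 0 by omega] using this

/-- The alternating zeta value `η(a) = (1 - 2^{1-a}) ζ(a)`. -/
lemma hasSum_eta {a : ℕ} (ha : 2 ≤ a) :
    HasSum (fun n : ℕ => (-1 : ℝ) ^ n / ((n : ℝ) + 1) ^ a) ((1 - 2 / 2 ^ a) * rzeta a) := by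
  have h1 := hasSum_rzeta ha
  have h2 : HasSum (fun n : ℕ => (1 - (-1 : ℝ) ^ n) / ((n : ℝ) + 1) ^ a)
      (0 + 2 / 2 ^ a * rzeta a) := by
    refine HasSum.even_add_odd ?_ ?_
    · simp [pow_mul]
    · refine hasSum_of_eq (h1.mul_left (2 / 2 ^ a)) (fun k => ?_) rfl
      rw [pow_succ, pow_mul]
      push_cast
      rw [show (2 : ℝ) * k + 1 + 1 = 2 * (k + 1) by ring, mul_pow]
      norm_num
      field_simp
  exact hasSum_of_eq (h1.sub h2) (fun n => by ring) (by ring)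

/-- `n⁻² (n - m)⁻²` is summable because `(n, m) ↦ (n, n - m)` is injective into `ℕ × ℤ`. -/
lemma summable_diff :
    Summable (fun p : ℕ × ℕ => 1 / ((p.1 : ℝ) + 1) ^ 2 * (1 / ((p.1 : ℝ) - p.2) ^ 2)) := by
  have h1 : Summable (fun n : ℕ => 1 / ((n : ℝ) + 1) ^ 2) := summable_shift le_rfl
  have h2 : Summable (fun k : ℤ => 1 / (k : ℝ) ^ 2) := Real.summable_one_div_int_pow.2 (by norm_num)
  have h3 := h1.mul_of_nonneg h2 (fun n => by positivity) (fun k => by positivity)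
  have hi : Function.Injective (fun p : ℕ × ℕ => ((p.1, (p.1 : ℤ) - p.2) : ℕ × ℤ)) := by
    rintro ⟨a, b⟩ ⟨c, d⟩ h
    simp only [Prod.mk.injEq] at h ⊢
    omega
  have := h3.comp_injective hi
  refine this.congr fun p => ?_
  simp

/-- Follows from `|m - n| ≤ m + n + 2`; for `m = n` both sides are `0`. -/
lemma abs_one_div_sq_sub_sq_le (m n : ℕ) :
    1 / |((n : ℝ) + 1) ^ 2 - ((m : ℝ) + 1) ^ 2| ≤ 1 / ((m : ℝ) - n) ^ 2 := by
  rcases eq_or_ne m n with rfl | hne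
  · simp
  have hd : (m : ℝ) - n ≠ 0 := by rw [sub_ne_zero]; exact_mod_cast hne
  have hm : (0 : ℝ) ≤ m := by positivity
  have hn : (0 : ℝ) ≤ n := by positivity
  apply one_div_le_one_div_of_le (by positivity)
  rw [show ((n : ℝ) + 1) ^ 2 - ((m : ℝ) + 1) ^ 2 = -((m - n) * (m + n + 2)) by ring, abs_neg,
    abs_mul, ← sq_abs, sq]
  refine mul_le_mul_of_nonneg_left ?_ (abs_nonneg _)
  rw [abs_le, abs_of_nonneg (by positivity : (0 : ℝ) ≤ (m : ℝ) + n + 2)]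
  constructor <;> linarith

lemma wt_nonneg (m n : ℕ) : 0 ≤ wt m n := by unfold wt; split_ifs <;> norm_num

lemma wt_le (m n : ℕ) : wt m n ≤ 3 := by unfold wt; split_ifs <;> norm_num

lemma summable_first {N : ℕ} (hN : 2 ≤ N) :
    Summable (fun p : ℕ × ℕ => (-1 : ℝ) ^ p.1 / ((p.1 : ℝ) + 1) ^ N *
      (wt p.1 p.2 / (((p.2 : ℝ) + 1) * (((p.2 : ℝ) + 1) ^ 2 - ((p.1 : ℝ) + 1) ^ 2)))) := by
  refine Summable.of_norm_bounded (summable_diff.mul_left 3) ?_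
  rintro ⟨m, n⟩
  simp only [norm_mul, norm_div, norm_pow, norm_neg, norm_one, one_pow, Real.norm_eq_abs]
  rw [abs_of_nonneg (wt_nonneg m n), abs_of_nonneg (show (0 : ℝ) ≤ (m : ℝ) + 1 by positivity),
    abs_of_nonneg (show (0 : ℝ) ≤ (n : ℝ) + 1 by positivity)]
  have h1 : 1 / ((m : ℝ) + 1) ^ N ≤ 1 / ((m : ℝ) + 1) ^ 2 :=
    one_div_le_one_div_of_le (by positivity) (pow_le_pow_right₀ (by linarith [Nat.cast_nonneg (α := ℝ) m]) hN)
  have h2 := abs_one_div_sq_sub_sq_le m n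
  have h3 : 1 / ((n : ℝ) + 1) ≤ 1 := by
    rw [div_le_one (by positivity)]; linarith [Nat.cast_nonneg (α := ℝ) n]
  have h4 := wt_le m n
  calc _ = 1 / ((m : ℝ) + 1) ^ N * (wt m n * ((1 / ((n : ℝ) + 1)) *
          (1 / |((n : ℝ) + 1) ^ 2 - ((m : ℝ) + 1) ^ 2|))) := by
        simp only [div_eq_mul_inv, mul_inv]; ring
    _ ≤ 1 / ((m : ℝ) + 1) ^ 2 * (3 * (1 * (1 / ((m : ℝ) - n) ^ 2))) := by
        have := wt_nonneg m n
        gcongr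
    _ = _ := by ring

lemma summable_second {N : ℕ} (hN : 2 ≤ N) :
    Summable (fun p : ℕ × ℕ => 1 / ((p.1 : ℝ) + 1) ^ N *
      (wt p.2 p.1 * (-1 : ℝ) ^ p.2 / (((p.1 : ℝ) + 1) ^ 2 - ((p.2 : ℝ) + 1) ^ 2))) := by
  refine Summable.of_norm_bounded (summable_diff.mul_left 3) ?_
  rintro ⟨n, m⟩
  simp only [norm_mul, norm_div, norm_pow, norm_neg, norm_one, one_pow, Real.norm_eq_abs]
  rw [abs_of_nonneg (wt_nonneg m n), abs_of_nonneg (show (0 : ℝ) ≤ (n : ℝ) + 1 by positivity)]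
  have h1 : 1 / ((n : ℝ) + 1) ^ N ≤ 1 / ((n : ℝ) + 1) ^ 2 :=
    one_div_le_one_div_of_le (by positivity) (pow_le_pow_right₀ (by linarith [Nat.cast_nonneg (α := ℝ) n]) hN)
  have h2 := abs_one_div_sq_sub_sq_le m n
  have h4 := wt_le m n
  calc _ = 1 / ((n : ℝ) + 1) ^ N * (wt m n *
          (1 / |((n : ℝ) + 1) ^ 2 - ((m : ℝ) + 1) ^ 2|)) := by
        simp only [div_eq_mul_inv]; ring
    _ ≤ 1 / ((n : ℝ) + 1) ^ 2 * (3 * (1 / ((m : ℝ) - n) ^ 2)) := by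
        have := wt_nonneg m n
        gcongr
    _ = _ := by ring

/-! ### The weighted double series -/

/-- The geometric sum over `j` collapses to a difference quotient off the diagonal; on the diagonal
the quotients on the right are `0` (division by zero) and the explicit diagonal term takes over. -/
lemma geom_collapse (s : ℕ) (hs : 2 ≤ s) (m n : ℕ) :
    ∑ j ∈ Finset.Icc 1 (s - 1), wt m n *
        ((-1 : ℝ) ^ m / ((m : ℝ) + 1) ^ (2 * s - 2 * j) * (1 / ((n : ℝ) + 1) ^ (2 * j + 1)))
      = (-1 : ℝ) ^ m / ((m : ℝ) + 1) ^ (2 * s - 2) *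
          (wt m n / (((n : ℝ) + 1) * (((n : ℝ) + 1) ^ 2 - ((m : ℝ) + 1) ^ 2)))
        - 1 / ((n : ℝ) + 1) ^ (2 * s - 1) *
          (wt m n * (-1 : ℝ) ^ m / (((n : ℝ) + 1) ^ 2 - ((m : ℝ) + 1) ^ 2))
        + (if n = m then ((s : ℝ) - 1) * ((-1 : ℝ) ^ m / ((m : ℝ) + 1) ^ (2 * s + 1)) else 0) := by
  obtain ⟨t, rfl⟩ : ∃ t, s = t + 1 := ⟨s - 1, by omega⟩
  have hre : ∀ f : ℕ → ℝ, ∑ j ∈ Finset.Icc 1 (t + 1 - 1), f j = ∑ i ∈ Finset.range t, f (i + 1) := by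
    intro f
    rw [Nat.add_sub_cancel, Finset.range_eq_Ico, Finset.sum_Ico_add' f 0 t 1]
    rfl
  rw [hre]
  have hx : (0 : ℝ) < (m : ℝ) + 1 := by positivity
  have hy : (0 : ℝ) < (n : ℝ) + 1 := by positivity
  rcases eq_or_ne n m with rfl | hne
  · simp only [sub_self, mul_zero, div_zero, if_true, zero_add]
    rw [Finset.sum_congr rfl (g := fun _ => (-1 : ℝ) ^ n / ((n : ℝ) + 1) ^ (2 * (t + 1) + 1))]
    · simp
    · intro i hi
      have hi' := Finset.mem_range.1 hi
      rw [wt, if_neg (lt_irrefl _), one_mul, div_mul_div_comm, mul_one, ← pow_add]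
      congr 2
      omega
  · rw [if_neg hne, add_zero]
    have hd : ((n : ℝ) + 1) ^ 2 - ((m : ℝ) + 1) ^ 2 ≠ 0 := by
      rw [show ((n : ℝ) + 1) ^ 2 - ((m : ℝ) + 1) ^ 2 = (n - m) * (n + m + 2) by ring]
      refine mul_ne_zero ?_ (by positivity)
      rw [sub_ne_zero]; exact_mod_cast hne
    have key : ∀ t : ℕ, ∑ i ∈ Finset.range t,
        1 / ((((m : ℝ) + 1) ^ 2) ^ (t - i) * (((n : ℝ) + 1) ^ 2) ^ (i + 1))
        = (1 / (((m : ℝ) + 1) ^ 2) ^ t - 1 / (((n : ℝ) + 1) ^ 2) ^ t) /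
          (((n : ℝ) + 1) ^ 2 - ((m : ℝ) + 1) ^ 2) := by
      intro t
      induction t with
      | zero => simp
      | succ t ih =>
        rw [Finset.sum_range_succ]
        have : ∑ i ∈ Finset.range t,
            1 / ((((m : ℝ) + 1) ^ 2) ^ (t + 1 - i) * (((n : ℝ) + 1) ^ 2) ^ (i + 1))
            = 1 / ((m : ℝ) + 1) ^ 2 * ∑ i ∈ Finset.range t,
              1 / ((((m : ℝ) + 1) ^ 2) ^ (t - i) * (((n : ℝ) + 1) ^ 2) ^ (i + 1)) := by
          rw [Finset.mul_sum]
          refine Finset.sum_congr rfl fun i hi => ?_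
          have hi' := Finset.mem_range.1 hi
          rw [show t + 1 - i = t - i + 1 by omega, pow_succ _ (t - i)]
          field_simp
        rw [this, ih, show t + 1 - t = 1 by omega, pow_succ, pow_succ]
        generalize (n : ℝ) + 1 = y at *
        generalize (m : ℝ) + 1 = x at *
        field_simp
        ring
    have h := key t
    rw [show 2 * (t + 1) - 2 = 2 * t by omega, show 2 * (t + 1) - 1 = 2 * t + 1 by omega]
    have e : ∀ i ∈ Finset.range t, wt m n *
        ((-1 : ℝ) ^ m / ((m : ℝ) + 1) ^ (2 * (t + 1) - 2 * (i + 1)) *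
          (1 / ((n : ℝ) + 1) ^ (2 * (i + 1) + 1)))
        = wt m n * (-1 : ℝ) ^ m / ((n : ℝ) + 1) *
          (1 / ((((m : ℝ) + 1) ^ 2) ^ (t - i) * (((n : ℝ) + 1) ^ 2) ^ (i + 1))) := by
      intro i hi
      rw [show 2 * (t + 1) - 2 * (i + 1) = 2 * (t - i) by omega, pow_mul, pow_succ _ (2 * (i + 1)),
        pow_mul]
      field_simp
    rw [Finset.sum_congr rfl e, ← Finset.mul_sum, h, pow_mul, pow_succ _ (2 * t), pow_mul]
    field_simp

/-- Since the weight is `1 + 2·[m < n]`, the weighted double series is `η(b) ζ(a) + 2 ζ(a, b̄)`. -/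
lemma hasSum_wt_double {a b : ℕ} (ha : 2 ≤ a) (hb : 2 ≤ b) :
    HasSum (fun p : ℕ × ℕ => wt p.1 p.2 *
        ((-1 : ℝ) ^ p.1 / ((p.1 : ℝ) + 1) ^ b * (1 / ((p.2 : ℝ) + 1) ^ a)))
      ((1 - 2 / 2 ^ b) * rzeta b * rzeta a + 2 * dzetaAB a b) := by
  have hall : Summable (fun p : ℕ × ℕ =>
      (-1 : ℝ) ^ p.1 / ((p.1 : ℝ) + 1) ^ b * (1 / ((p.2 : ℝ) + 1) ^ a)) :=
    summable_mul_of_summable_norm (summable_alt_shift hb).norm (summable_shift ha).norm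
  have h1 := (hasSum_eta hb).mul (hasSum_rzeta ha) hall
  have hlow : Summable (fun p : ℕ × ℕ => if p.2 < p.1 then
      (-1 : ℝ) ^ p.2 / ((p.2 : ℝ) + 1) ^ b * (1 / ((p.1 : ℝ) + 1) ^ a) else 0) := by
    have := (hall.comp_injective Prod.swap_injective).indicator {p : ℕ × ℕ | p.2 < p.1}
    refine this.congr fun p => ?_
    simp [Set.indicator_apply]
  have hfib : ∀ n : ℕ, HasSum (fun m : ℕ => if m < n then
      (-1 : ℝ) ^ m / ((m : ℝ) + 1) ^ b * (1 / ((n : ℝ) + 1) ^ a) else 0)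
      (∑ m ∈ Finset.Ioo 0 (n + 1), (1 / ((n + 1 : ℕ) : ℝ) ^ a) *
        ((-1 : ℝ) ^ (m - 1) / (m : ℝ) ^ b)) := by
    intro n
    have e : ∑ m ∈ Finset.Ioo 0 (n + 1), (1 / ((n + 1 : ℕ) : ℝ) ^ a) *
        ((-1 : ℝ) ^ (m - 1) / (m : ℝ) ^ b) = ∑ m ∈ Finset.range n, if m < n then
      (-1 : ℝ) ^ m / ((m : ℝ) + 1) ^ b * (1 / ((n : ℝ) + 1) ^ a) else 0 := by
      have : Finset.Ioo 0 (n + 1) = Finset.Ico (0 + 1) (n + 1) := by ext; simp; omega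
      rw [this, ← Finset.sum_Ico_add', ← Finset.range_eq_Ico]
      refine Finset.sum_congr rfl fun i hi => ?_
      rw [if_pos (Finset.mem_range.1 hi)]
      push_cast
      rw [mul_comm]
    rw [e]
    refine hasSum_sum_of_ne_finset_zero fun m hm => ?_
    rw [if_neg (by simpa using hm)]
  have h2 : HasSum (fun p : ℕ × ℕ => if p.1 < p.2 then
      (-1 : ℝ) ^ p.1 / ((p.1 : ℝ) + 1) ^ b * (1 / ((p.2 : ℝ) + 1) ^ a) else 0) (dzetaAB a b) := by
    have h3 := hlow.hasSum
    have h4 := h3.prod_fiberwise hfib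
    have h5 := (hasSum_nat_add_iff (f := fun n : ℕ => ∑ m ∈ Finset.Ioo 0 n, (1 / (n : ℝ) ^ a) *
        ((-1 : ℝ) ^ (m - 1) / (m : ℝ) ^ b)) 1).1 h4
    have h6 := h5.tsum_eq
    simp only [Finset.range_one, Finset.sum_singleton, Finset.Ioo_self, Finset.sum_empty,
      add_zero] at h6
    rw [dzetaAB, h6]
    exact (Equiv.prodComm ℕ ℕ).hasSum_iff.1 (by simpa [Function.comp_def] using h3)
  refine hasSum_of_eq (h1.add (h2.mul_left 2)) (fun p => ?_) rfl
  unfold wt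
  split_ifs <;> ring

/-- The harmonic numbers cancel between the two families of fibre sums. -/
lemma fiber_combine (t m : ℕ) :
    (-1 : ℝ) ^ m / ((m : ℝ) + 1) ^ (2 * t) *
        ((harm (m + 1) - harm (2 * (m + 1)) + 5 / (4 * ((m : ℝ) + 1))) / ((m : ℝ) + 1) ^ 2)
      - 1 / ((m : ℝ) + 1) ^ (2 * t + 1) * (1 / ((m : ℝ) + 1) * ((-1 : ℝ) ^ m *
        (harm (m + 1) - harm (2 * (m + 1)) - 3 / (4 * ((m : ℝ) + 1))) + 3 / (2 * ((m : ℝ) + 1))))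
      = 2 * ((-1 : ℝ) ^ m / ((m : ℝ) + 1) ^ (2 * t + 3))
        - 3 / 2 * (1 / ((m : ℝ) + 1) ^ (2 * t + 3)) := by
  rw [pow_add _ (2 * t) 1, pow_add _ (2 * t) 3]
  have hx : (m : ℝ) + 1 ≠ 0 := by positivity
  generalize (m : ℝ) + 1 = x at *
  have hX : x ^ (2 * t) ≠ 0 := pow_ne_zero _ hx
  generalize x ^ (2 * t) = X at *
  generalize (-1 : ℝ) ^ m = e
  field_simp
  ring

lemma hasSum_diagonal (s : ℕ) (hs : 2 ≤ s) :
    HasSum (fun p : ℕ × ℕ => if p.2 = p.1 then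
      ((s : ℝ) - 1) * ((-1 : ℝ) ^ p.1 / ((p.1 : ℝ) + 1) ^ (2 * s + 1)) else 0)
      (((s : ℝ) - 1) * ((1 - 2 / 2 ^ (2 * s + 1)) * rzeta (2 * s + 1))) := by
  have hi : Function.Injective (fun m : ℕ => (m, m)) := fun a b h => (Prod.mk.inj h).1
  refine (hi.hasSum_iff ?_).1 ?_
  · rintro ⟨m, n⟩ h
    refine if_neg fun hmn => h ⟨m, ?_⟩
    simp only at hmn
    rw [hmn]
  · have hη := hasSum_eta (a := 2 * s + 1) (by omega)
    simpa [Function.comp_def] using hη.mul_left ((s : ℝ) - 1)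

/-- The weighted double series summed over `j`, evaluated in two ways: through `hasSum_wt_double`, and
through `geom_collapse` followed by the two fibrewise summations. -/
lemma weighted_sum (s : ℕ) (hs : 2 ≤ s) :
    ∑ j ∈ Finset.Icc 1 (s - 1), ((1 - 2 / 2 ^ (2 * s - 2 * j)) * rzeta (2 * s - 2 * j) *
        rzeta (2 * j + 1) + 2 * dzetaAB (2 * j + 1) (2 * s - 2 * j))
      = ((s : ℝ) + 1) * ((1 - 2 / 2 ^ (2 * s + 1)) * rzeta (2 * s + 1))
        - 3 / 2 * rzeta (2 * s + 1) := by
  have hG : HasSum (fun p : ℕ × ℕ => ∑ j ∈ Finset.Icc 1 (s - 1), wt p.1 p.2 *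
      ((-1 : ℝ) ^ p.1 / ((p.1 : ℝ) + 1) ^ (2 * s - 2 * j) * (1 / ((p.2 : ℝ) + 1) ^ (2 * j + 1))))
      (∑ j ∈ Finset.Icc 1 (s - 1), ((1 - 2 / 2 ^ (2 * s - 2 * j)) * rzeta (2 * s - 2 * j) *
        rzeta (2 * j + 1) + 2 * dzetaAB (2 * j + 1) (2 * s - 2 * j))) := by
    refine hasSum_sum fun j hj => ?_
    have hj' := Finset.mem_Icc.1 hj
    exact hasSum_wt_double (by omega) (by omega)
  have hη := hasSum_eta (a := 2 * s + 1) (by omega)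
  have hζ := hasSum_rzeta (a := 2 * s + 1) (by omega)
  have hD := hasSum_diagonal s hs
  obtain ⟨S₁, h1⟩ := summable_first (N := 2 * s - 2) (by omega)
  obtain ⟨S₂, h2⟩ := summable_second (N := 2 * s - 1) (by omega)
  have f1 := HasSum.prod_fiberwise h1 (g := fun m : ℕ => (-1 : ℝ) ^ m / ((m : ℝ) + 1) ^ (2 * s - 2) *
      ((harm (m + 1) - harm (2 * (m + 1)) + 5 / (4 * ((m : ℝ) + 1))) / ((m : ℝ) + 1) ^ 2))
    (fun m => HasSum.mul_left ((-1 : ℝ) ^ m / ((m : ℝ) + 1) ^ (2 * s - 2)) (hasSum_wt_right m))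
  have f2 := HasSum.prod_fiberwise h2 (g := fun n : ℕ => 1 / ((n : ℝ) + 1) ^ (2 * s - 1) *
      (1 / ((n : ℝ) + 1) * ((-1 : ℝ) ^ n * (harm (n + 1) - harm (2 * (n + 1))
        - 3 / (4 * ((n : ℝ) + 1))) + 3 / (2 * ((n : ℝ) + 1)))))
    (fun n => HasSum.mul_left (1 / ((n : ℝ) + 1) ^ (2 * s - 1)) (hasSum_wt_left n))
  have h2' := (Equiv.prodComm ℕ ℕ).hasSum_iff.2 h2
  have hsum := (h1.sub h2').add hD
  have e1 := hG.unique (hasSum_of_eq hsum (fun p => geom_collapse s hs p.1 p.2) rfl)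
  have e2 : S₁ - S₂ = 2 * ((1 - 2 / 2 ^ (2 * s + 1)) * rzeta (2 * s + 1))
      - 3 / 2 * rzeta (2 * s + 1) := by
    refine (f1.sub f2).unique
      (hasSum_of_eq ((hη.mul_left 2).sub (hζ.mul_left (3 / 2))) (fun m => ?_) rfl)
    obtain ⟨t, rfl⟩ : ∃ t, s = t + 1 := ⟨s - 1, by omega⟩
    have e := fiber_combine t m
    rw [show 2 * (t + 1) - 2 = 2 * t by omega, show 2 * (t + 1) - 1 = 2 * t + 1 by omega,
      show 2 * (t + 1) + 1 = 2 * t + 3 by ring]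
    exact e
  rw [e1]
  linear_combination e2

theorem stmt16 (s : ℕ) (hs : 2 ≤ s) :
    ∑ j ∈ Finset.Icc 1 (s - 1), dzetaAB (2 * j + 1) (2 * s - 2 * j)
      = ((2 * (s : ℝ) - 1) / 4 - ((s : ℝ) + 1) / 2 ^ (2 * s + 1)) * rzeta (2 * s + 1)
        - ∑ k ∈ Finset.Icc 1 (s - 1),
            (1 / 2 - (4 : ℝ) ^ (-(k : ℤ))) * rzeta (2 * k) * rzeta (2 * s + 1 - 2 * k) := by
  have h := weighted_sum s hs
  rw [Finset.sum_add_distrib, ← Finset.mul_sum] at h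
  have hre : ∑ k ∈ Finset.Icc 1 (s - 1),
        (1 / 2 - (4 : ℝ) ^ (-(k : ℤ))) * rzeta (2 * k) * rzeta (2 * s + 1 - 2 * k)
      = 1 / 2 * ∑ j ∈ Finset.Icc 1 (s - 1), (1 - 2 / 2 ^ (2 * s - 2 * j)) * rzeta (2 * s - 2 * j) *
        rzeta (2 * j + 1) := by
    rw [Finset.mul_sum]
    refine Finset.sum_nbij' (fun k => s - k) (fun k => s - k) ?_ ?_ ?_ ?_ ?_
    · intro k hk; simp only [Finset.mem_Icc] at *; omega
    · intro k hk; simp only [Finset.mem_Icc] at *; omega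
    · intro k hk; simp only [Finset.mem_Icc] at *; omega
    · intro k hk; simp only [Finset.mem_Icc] at *; omega
    · intro k hk
      simp only [Finset.mem_Icc] at hk
      rw [show 2 * s - 2 * (s - k) = 2 * k by omega,
        show 2 * (s - k) + 1 = 2 * s + 1 - 2 * k by omega, zpow_neg, zpow_natCast, pow_mul]
      norm_num
      ring
  rw [hre]
  linear_combination 1 / 2 * h
end

section
/- For every integer s ≥ 2, 4 ∑_{j=1}^{s-1} ζ((2j)‾, (2s-2j)‾) = (4^{1-s} - 1) ζ(2s), where ζ((2j)‾, (2s-2j)‾) = ∑_{n=1}^∞ ∑_{m=1}^{n-1} ((-1)^{n-1}/n^{2j})·((-1)^{m-1}/m^{2s-2j}). -/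
/-!
Write `x = 1/n²`, `y = 1/m²`. For `n ≠ m` the geometric sum
`∑_{j=1}^{s-1} x^j y^{s-j}` equals `(x^{s-1} - y^{s-1}) / (m² - n²)`, which is `h(n,m) + h(m,n)` up to
the sign `(-1)^{n+m}`, where `h(n,m) = n^{-(2s-2)} / (m² - n²)` (`geom_pair`). Hence the
truncation to `m < n ≤ N` of the sum of double zeta values is the full square sum
`∑_{n,m ≤ N} (-1)^{n+m} h(n,m)`, with the diagonal omitted (`sum_triangle`).

The inner sum over `m` is evaluated by partial fractions (`inner_closed`): it is
`(-1)^n/(2n²) + 1/(4n²)` up to a block of `2n` terms `±1/(2nk)` that drifts to infinity with `N`.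
These blocks are bounded by `1`, so dominated convergence (with majorant `2/n^{2s-2}`) gives the limit
`∑_n n^{-2s} ((-1)^n/2 + 1/4)`. Four times this is `∑ (1 + 2(-1)^n) n^{-2s}`, and keeping only even
`n` in `∑ (1 + (-1)^n) n^{-2s}` turns it into `(4^{1-s} - 1) ζ(2s)`.
-/

open scoped BigOperators

lemma sum_Ioo_shift (f : ℕ → ℝ) (N : ℕ) :
    ∑ m ∈ Finset.Ioo 0 (N + 1), f m = ∑ i ∈ Finset.range N, f (i + 1) := by
  have h : Finset.Ioo 0 (N + 1) = Finset.Ico 1 (N + 1) := by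
    ext x; simp only [Finset.mem_Ioo, Finset.mem_Ico]; omega
  rw [h, Finset.sum_Ico_eq_sum_range]
  simp [add_comm]

lemma sum_triangle (h : ℕ → ℕ → ℝ) (h0 : ∀ n, h n n = 0) (N : ℕ) :
    ∑ n ∈ Finset.range N, ∑ m ∈ Finset.range n, (h n m + h m n)
      = ∑ n ∈ Finset.range N, ∑ m ∈ Finset.range N, h n m := by
  induction N with
  | zero => simp
  | succ N ih =>
    simp only [Finset.sum_range_succ, Finset.sum_add_distrib, h0] at ih ⊢
    linarith

/-- The off-diagonal kernel `(-1)^{n+m} / (n^{2s-2} (m² - n²))`; division by zero makes it vanish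
on the diagonal. -/
noncomputable def kern (s n m : ℕ) : ℝ :=
  (1 / (n : ℝ) ^ (2 * s - 2)) * ((-1 : ℝ) ^ (n + m) / ((m : ℝ) ^ 2 - (n : ℝ) ^ 2))

lemma geom_pair (s n m : ℕ) (hs : 2 ≤ s) (hm : 0 < m) (hmn : m < n) :
    ∑ j ∈ Finset.Icc 1 (s - 1),
      ((-1 : ℝ) ^ (n - 1) / (n : ℝ) ^ (2 * j)) * ((-1 : ℝ) ^ (m - 1) / (m : ℝ) ^ (2 * s - 2 * j))
      = kern s n m + kern s m n := by
  obtain ⟨t, rfl⟩ : ∃ t, s = t + 1 := ⟨s - 1, by omega⟩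
  have hn0 : (n : ℝ) ≠ 0 := by exact_mod_cast (by omega : n ≠ 0)
  have hm0 : (m : ℝ) ≠ 0 := by exact_mod_cast hm.ne'
  have hlt : (m : ℝ) < n := by exact_mod_cast hmn
  have hmp : (0 : ℝ) < m := by exact_mod_cast hm
  have hd : (m : ℝ) ^ 2 - (n : ℝ) ^ 2 ≠ 0 := by nlinarith
  have hd' : (n : ℝ) ^ 2 - (m : ℝ) ^ 2 ≠ 0 := by nlinarith
  have hsign : (-1 : ℝ) ^ (n - 1) * (-1 : ℝ) ^ (m - 1) = (-1 : ℝ) ^ (n + m) := by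
    rw [← pow_add, show n + m = (n - 1 + (m - 1)) + 2 by omega, pow_add _ _ 2]; norm_num
  have hsign' : (-1 : ℝ) ^ (m + n) = (-1 : ℝ) ^ (n + m) := by rw [add_comm]
  set x : ℝ := ((n : ℝ) ^ 2)⁻¹ with hx
  set y : ℝ := ((m : ℝ) ^ 2)⁻¹ with hy
  have hIcc : Finset.Icc 1 t = Finset.Ico 1 (t + 1) := by
    ext a; simp only [Finset.mem_Icc, Finset.mem_Ico]; omega
  have key := (Commute.all x y).geom_sum₂_mul t
  have hxy : x - y = x * y * ((m : ℝ) ^ 2 - (n : ℝ) ^ 2) := by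
    rw [hx, hy]; field_simp
  have hL : ∑ j ∈ Finset.Icc 1 (t + 1 - 1),
      ((-1 : ℝ) ^ (n - 1) / (n : ℝ) ^ (2 * j))
        * ((-1 : ℝ) ^ (m - 1) / (m : ℝ) ^ (2 * (t + 1) - 2 * j))
      = (-1 : ℝ) ^ (n + m) * (x * y * ∑ i ∈ Finset.range t, x ^ i * y ^ (t - 1 - i)) := by
    rw [Nat.add_sub_cancel, hIcc, Finset.sum_Ico_eq_sum_range, Nat.add_sub_cancel, Finset.mul_sum,
      Finset.mul_sum]
    refine Finset.sum_congr rfl fun i hi => ?_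
    have hi' := Finset.mem_range.1 hi
    rw [show 2 * (t + 1) - 2 * (1 + i) = 2 * (t - 1 - i + 1) by omega, ← hsign,
      pow_mul (n : ℝ), pow_mul (m : ℝ), div_eq_mul_inv, div_eq_mul_inv, ← inv_pow ((n : ℝ) ^ 2), ← inv_pow ((m : ℝ) ^ 2), ← hx, ← hy]
    ring
  rw [hxy] at key
  have hsum : x * y * ∑ i ∈ Finset.range t, x ^ i * y ^ (t - 1 - i)
      = (x ^ t - y ^ t) / ((m : ℝ) ^ 2 - (n : ℝ) ^ 2) := by
    rw [eq_div_iff hd, ← key]; ring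
  rw [hL, hsum]
  unfold kern
  rw [show 2 * (t + 1) - 2 = 2 * t by omega, hsign', one_div, one_div, pow_mul (n : ℝ), pow_mul (m : ℝ),
    ← inv_pow ((n : ℝ) ^ 2), ← inv_pow ((m : ℝ) ^ 2), ← hx, ← hy, ← neg_sub ((m : ℝ) ^ 2) ((n : ℝ) ^ 2), div_neg]
  ring

/-- Partial fractions over the range `1 ≤ m < n + k + 1`. The terms with `m < n`
and the shifted terms cancel, up to a block of `2n` consecutive terms. -/
lemma inner_closed (n k : ℕ) (hn : 0 < n) :
    ∑ i ∈ Finset.range (n + k), (-1 : ℝ) ^ (n + (i + 1)) / (((i + 1 : ℕ) : ℝ) ^ 2 - (n : ℝ) ^ 2)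
      = (1 / (2 * n)) * ((-1 : ℝ) ^ n / n
          - ∑ i ∈ Finset.range (2 * n), (-1 : ℝ) ^ (k + i + 1) / ((k + i + 1 : ℕ) : ℝ))
        + 1 / (4 * (n : ℝ) ^ 2) := by
  induction k with
  | zero =>
    obtain ⟨p, rfl⟩ : ∃ p, n = p + 1 := ⟨n - 1, by omega⟩
    have hp : ((p : ℝ) + 1) ≠ 0 := by positivity
    have h1 : ∀ i ∈ Finset.range p,
        (-1 : ℝ) ^ (p + 1 + (i + 1)) / (((i + 1 : ℕ) : ℝ) ^ 2 - ((p + 1 : ℕ) : ℝ) ^ 2)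
        = (1 / (2 * ((p : ℝ) + 1))) *
          (-((-1 : ℝ) ^ (p - 1 - i + 1) / ((p - 1 - i + 1 : ℕ) : ℝ))
            - (-1 : ℝ) ^ (p + 1 + i + 1) / ((p + 1 + i + 1 : ℕ) : ℝ)) := by
      intro i hi
      obtain ⟨q, rfl⟩ : ∃ q, p = i + q + 1 := ⟨p - i - 1, by
        have := Finset.mem_range.1 hi; omega⟩
      rw [show i + q + 1 - 1 - i + 1 = q + 1 by omega,
        show i + q + 1 + 1 + (i + 1) = q + 1 + 2 * (i + 1) by ring,
        show i + q + 1 + 1 + i + 1 = q + 1 + 2 * (i + 1) by ring, pow_add _ (q + 1), pow_mul]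
      have hd : (((i : ℝ) + 1) ^ 2 - ((i : ℝ) + q + 1 + 1) ^ 2)
          = -(((q : ℝ) + 1) * ((q : ℝ) + 1 + 2 * (i + 1))) := by ring
      push_cast at hp ⊢
      rw [hd]
      have : (q : ℝ) + 1 ≠ 0 := by positivity
      have : (q : ℝ) + 1 + 2 * (i + 1) ≠ 0 := by positivity
      norm_num
      field_simp
      ring
    rw [add_zero, Finset.sum_range_succ, Finset.sum_congr rfl h1, ← Finset.mul_sum,
      Finset.sum_sub_distrib, Finset.sum_neg_distrib,
      Finset.sum_range_reflect (fun i => (-1 : ℝ) ^ (i + 1) / ((i + 1 : ℕ) : ℝ)) p,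
      show 2 * (p + 1) = p + 1 + p + 1 by ring, Finset.sum_range_succ, Finset.sum_range_add,
      Finset.sum_range_succ]
    have hs : (-1 : ℝ) ^ (0 + (p + 1 + p) + 1) = 1 := by
      rw [show 0 + (p + 1 + p) + 1 = 2 * (p + 1) by ring, pow_mul]; norm_num
    rw [hs]
    simp only [zero_add, sub_self, div_zero, add_assoc]
    push_cast
    have : (p : ℝ) + (1 + (p + 1)) = 2 * (p + 1) := by ring
    rw [this]
    field_simp
    ring
  | succ k ih =>
    have hn0 : (n : ℝ) ≠ 0 := by exact_mod_cast hn.ne'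
    have hb := Finset.sum_range_succ
      (fun i => (-1 : ℝ) ^ (k + i + 1) / ((k + i + 1 : ℕ) : ℝ)) (2 * n)
    rw [Finset.sum_range_succ'] at hb
    have hshift : ∑ i ∈ Finset.range (2 * n), (-1 : ℝ) ^ (k + 1 + i + 1) / ((k + 1 + i + 1 : ℕ) : ℝ)
        = ∑ i ∈ Finset.range (2 * n),
          (-1 : ℝ) ^ (k + (i + 1) + 1) / ((k + (i + 1) + 1 : ℕ) : ℝ) :=
      Finset.sum_congr rfl fun i _ => by rw [show k + 1 + i + 1 = k + (i + 1) + 1 by ring]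
    rw [← add_assoc, Finset.sum_range_succ, ih, hshift, eq_sub_of_add_eq hb,
      show n + (n + k + 1) = k + 1 + 2 * n by ring, show k + 2 * n + 1 = k + 1 + 2 * n by ring,
      pow_add _ (k + 1), pow_mul]
    have h1 : (k : ℝ) + 1 ≠ 0 := by positivity
    have h2 : (k : ℝ) + 1 + 2 * n ≠ 0 := by positivity
    have hd : ((n : ℝ) + k + 1) ^ 2 - (n : ℝ) ^ 2 = ((k : ℝ) + 1) * (k + 1 + 2 * n) := by ring
    push_cast
    rw [hd]
    norm_num
    field_simp
    ring

lemma inner_bound (n N : ℕ) (hn : 0 < n) (hN : n ≤ N) :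
    |∑ i ∈ Finset.range N, (-1 : ℝ) ^ (n + (i + 1)) / (((i + 1 : ℕ) : ℝ) ^ 2 - (n : ℝ) ^ 2)|
      ≤ 2 := by
  obtain ⟨k, rfl⟩ := Nat.exists_eq_add_of_le hN
  rw [inner_closed n k hn]
  have hn1 : (1 : ℝ) ≤ n := by exact_mod_cast hn
  have hB : |∑ i ∈ Finset.range (2 * n), (-1 : ℝ) ^ (k + i + 1) / ((k + i + 1 : ℕ) : ℝ)|
      ≤ 2 * n := by
    refine (Finset.abs_sum_le_sum_abs _ _).trans ?_
    calc _ ≤ ∑ i ∈ Finset.range (2 * n), (1 : ℝ) := by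
          refine Finset.sum_le_sum fun i _ => ?_
          rw [abs_div, abs_pow, abs_neg, abs_one, one_pow, Nat.abs_cast]
          apply div_le_one_of_le₀ _ (by positivity)
          exact_mod_cast Nat.succ_pos _
      _ = _ := by simp
  set B := ∑ i ∈ Finset.range (2 * n), (-1 : ℝ) ^ (k + i + 1) / ((k + i + 1 : ℕ) : ℝ)
  have hA : |(-1 : ℝ) ^ n / n| ≤ 1 := by
    rw [abs_div, abs_pow, abs_neg, abs_one, one_pow, Nat.abs_cast]
    exact div_le_one_of_le₀ hn1 (by positivity)
  have h4 : |1 / (4 * (n : ℝ) ^ 2)| ≤ 1 / 4 := by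
    rw [abs_of_nonneg (by positivity)]
    apply one_div_le_one_div_of_le (by norm_num)
    nlinarith
  have hmain : |1 / (2 * (n : ℝ)) * ((-1 : ℝ) ^ n / n - B)| ≤ 3 / 2 := by
    rw [abs_mul, abs_of_nonneg (by positivity : 0 ≤ 1 / (2 * (n : ℝ))), one_div, inv_mul_le_iff₀
      (by positivity)]
    have := abs_sub ((-1 : ℝ) ^ n / n) B
    linarith
  have := abs_add_le (1 / (2 * (n : ℝ)) * ((-1 : ℝ) ^ n / n - B)) (1 / (4 * (n : ℝ) ^ 2))
  linarith

open Filter Topology in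
lemma inner_tendsto (n : ℕ) (hn : 0 < n) :
    Tendsto (fun N => ∑ i ∈ Finset.range N,
      (-1 : ℝ) ^ (n + (i + 1)) / (((i + 1 : ℕ) : ℝ) ^ 2 - (n : ℝ) ^ 2)) atTop
      (𝓝 ((-1 : ℝ) ^ n / (2 * (n : ℝ) ^ 2) + 1 / (4 * (n : ℝ) ^ 2))) := by
  have hn0 : (n : ℝ) ≠ 0 := by exact_mod_cast hn.ne'
  rw [← tendsto_add_atTop_iff_nat n]
  simp only [add_comm _ n]
  simp_rw [inner_closed n _ hn]
  have hA : Tendsto (fun k : ℕ => (-1 : ℝ) ^ k / (k : ℝ)) atTop (𝓝 0) := by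
    refine squeeze_zero_norm (fun k => ?_) tendsto_one_div_atTop_nhds_zero_nat
    simp
  have hB : Tendsto (fun k : ℕ => ∑ i ∈ Finset.range (2 * n),
      (-1 : ℝ) ^ (k + i + 1) / ((k + i + 1 : ℕ) : ℝ)) atTop (𝓝 0) := by
    rw [← Finset.sum_const_zero (s := Finset.range (2 * n))]
    refine tendsto_finsetSum _ fun i _ => ?_
    exact hA.comp (tendsto_add_atTop_nat (i + 1))
  have := ((hB.const_sub ((-1 : ℝ) ^ n / n)).const_mul (1 / (2 * (n : ℝ)))).add_const
    (1 / (4 * (n : ℝ) ^ 2))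
  convert this using 2
  field_simp
  ring

lemma summable_dzetaBB (a b : ℕ) (ha : 2 ≤ a) (hb : 2 ≤ b) :
    Summable fun n : ℕ => ∑ m ∈ Finset.Ioo 0 n,
      ((-1 : ℝ) ^ (n - 1) / (n : ℝ) ^ a) * ((-1 : ℝ) ^ (m - 1) / (m : ℝ) ^ b) := by
  have hSa : Summable fun n : ℕ => 1 / (n : ℝ) ^ a := Real.summable_one_div_nat_pow.2 (by omega)
  have hSb : Summable fun n : ℕ => 1 / (n : ℝ) ^ b := Real.summable_one_div_nat_pow.2 (by omega)
  refine Summable.of_norm_bounded (hSa.mul_right (∑' m : ℕ, 1 / (m : ℝ) ^ b)) fun n => ?_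
  rw [← Finset.mul_sum, norm_mul]
  refine mul_le_mul (by simp) ?_ (norm_nonneg _) (by positivity)
  refine (norm_sum_le _ _).trans ?_
  refine le_trans (le_of_eq ?_) (hSb.sum_le_tsum (Finset.Ioo 0 n) fun m _ => by positivity)
  exact Finset.sum_congr rfl fun m _ => by simp

lemma partial_sum_eq (s N : ℕ) (hs : 2 ≤ s) :
    ∑ n ∈ Finset.range (N + 1), ∑ j ∈ Finset.Icc 1 (s - 1), ∑ m ∈ Finset.Ioo 0 n,
      ((-1 : ℝ) ^ (n - 1) / (n : ℝ) ^ (2 * j)) * ((-1 : ℝ) ^ (m - 1) / (m : ℝ) ^ (2 * s - 2 * j))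
      = ∑ n ∈ Finset.range N, ∑ m ∈ Finset.range N, kern s (n + 1) (m + 1) := by
  rw [← sum_triangle (fun n m => kern s (n + 1) (m + 1)) (fun n => by simp [kern]),
    Finset.sum_range_succ']
  simp only [Finset.Ioo_self, Finset.sum_empty, Finset.sum_const_zero, add_zero]
  refine Finset.sum_congr rfl fun n _ => ?_
  rw [Finset.sum_comm, sum_Ioo_shift]
  refine Finset.sum_congr rfl fun m hm => ?_
  exact geom_pair s (n + 1) (m + 1) hs (by omega) (by have := Finset.mem_range.1 hm; omega)

open Filter Topology in
/-- Dominated convergence for the square partial sums, indexed by `n + 1`. -/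
lemma square_tendsto (s : ℕ) (hs : 2 ≤ s) :
    Tendsto (fun N => ∑ n ∈ Finset.range N, ∑ m ∈ Finset.range N, kern s (n + 1) (m + 1)) atTop
      (𝓝 (∑' n : ℕ, (1 / ((n + 1 : ℕ) : ℝ) ^ (2 * s - 2)) *
        ((-1 : ℝ) ^ (n + 1) / (2 * ((n + 1 : ℕ) : ℝ) ^ 2) + 1 / (4 * ((n + 1 : ℕ) : ℝ) ^ 2)))) := by
  have hS : Summable fun n : ℕ => 1 / ((n + 1 : ℕ) : ℝ) ^ (2 * s - 2) * 2 :=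
    ((summable_nat_add_iff 1).2 (Real.summable_one_div_nat_pow.2
      (by omega : 1 < 2 * s - 2))).mul_right 2
  have h := tendsto_tsum_of_dominated_convergence (𝓕 := atTop)
    (f := fun N n => if n < N then ∑ m ∈ Finset.range N, kern s (n + 1) (m + 1) else 0)
    (g := fun n : ℕ => (1 / ((n + 1 : ℕ) : ℝ) ^ (2 * s - 2)) *
        ((-1 : ℝ) ^ (n + 1) / (2 * ((n + 1 : ℕ) : ℝ) ^ 2) + 1 / (4 * ((n + 1 : ℕ) : ℝ) ^ 2)))
    hS (fun n => ?_) (Eventually.of_forall fun N n => ?_)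
  · refine h.congr fun N => ?_
    rw [tsum_eq_sum (s := Finset.range N) (fun n hn => if_neg (by simpa using hn))]
    exact Finset.sum_congr rfl fun n hn => if_pos (Finset.mem_range.1 hn)
  · refine ((inner_tendsto (n + 1) n.succ_pos).const_mul _).congr' ?_
    filter_upwards [eventually_gt_atTop n] with N hN
    rw [if_pos hN, Finset.mul_sum]
    rfl
  · split_ifs with hN
    · unfold kern
      rw [← Finset.mul_sum, norm_mul, Real.norm_of_nonneg (by positivity)]
      exact mul_le_mul_of_nonneg_left (inner_bound (n + 1) N n.succ_pos hN) (by positivity)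
    · rw [norm_zero]; positivity

/-- Only even `n` contribute to `∑ (1 + (-1)^n) n^{-2s}`. -/
lemma hasSum_even (s : ℕ) (hs : 2 ≤ s) :
    HasSum (fun n : ℕ => (1 + (-1 : ℝ) ^ n) * (1 / (n : ℝ) ^ (2 * s)))
      (2 * (1 / 4 ^ s) * rzeta (2 * s)) := by
  have hS : Summable fun n : ℕ => 1 / (n : ℝ) ^ (2 * s) :=
    Real.summable_one_div_nat_pow.2 (by omega)
  have hinj : Function.Injective fun k : ℕ => 2 * k := fun a b h => by simpa using h
  rw [← hinj.hasSum_iff]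
  · have := hS.hasSum.mul_left (2 * (1 / (4 : ℝ) ^ s))
    change HasSum _ (2 * (1 / (4 : ℝ) ^ s) * rzeta (2 * s)) at this
    convert this using 1
    funext k
    simp only [Function.comp, pow_mul, Nat.cast_mul, mul_pow]
    norm_num
    ring
  · intro n hn
    have : Odd n := by
      rw [← Nat.not_even_iff_odd]
      rintro ⟨r, hr⟩
      exact hn ⟨r, by simp only; omega⟩
    simp [this.neg_one_pow]

theorem stmt17 (s : ℕ) (hs : 2 ≤ s) :
    4 * ∑ j ∈ Finset.Icc 1 (s - 1), dzetaBB (2 * j) (2 * s - 2 * j)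
      = ((4 : ℝ) ^ (1 - (s : ℤ)) - 1) * rzeta (2 * s) := by
  have hsum := hasSum_sum (s := Finset.Icc 1 (s - 1)) fun j hj =>
    (summable_dzetaBB (2 * j) (2 * s - 2 * j)
      (by have := Finset.mem_Icc.1 hj; omega) (by have := Finset.mem_Icc.1 hj; omega)).hasSum
  have h1 := hsum.tendsto_sum_nat.comp (Filter.tendsto_add_atTop_nat 1)
  have h2 := (square_tendsto s hs).congr fun N => (partial_sum_eq s N hs).symm
  have heq := tendsto_nhds_unique h1 h2
  have hS : Summable fun n : ℕ => 1 / (n : ℝ) ^ (2 * s) :=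
    Real.summable_one_div_nat_pow.2 (by omega)
  -- `1 + 2(-1)^n = 2(1 + (-1)^n) - 1`
  have hE := ((hasSum_even s hs).mul_left 2).sub hS.hasSum
  have hE1 := (hasSum_nat_add_iff' 1).2 hE
  have hz : ((0 : ℕ) : ℝ) ^ (2 * s) = 0 := by
    rw [Nat.cast_zero]; exact zero_pow (by omega)
  simp only [Finset.range_one, Finset.sum_singleton, hz, div_zero, mul_zero, sub_zero] at hE1
  have h4 : (4 : ℝ) ^ (1 - (s : ℤ)) = 4 * (1 / 4 ^ s) := by
    rw [zpow_sub₀ (by norm_num), zpow_one, zpow_natCast]; ring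
  have hlhs : ∑ j ∈ Finset.Icc 1 (s - 1), dzetaBB (2 * j) (2 * s - 2 * j) = _ := heq
  rw [hlhs, ← tsum_mul_left, h4]
  have hE2 := hE1.tsum_eq
  change _ = 2 * (2 * (1 / 4 ^ s) * rzeta (2 * s)) - rzeta (2 * s) at hE2
  rw [show (4 * (1 / (4 : ℝ) ^ s) - 1) * rzeta (2 * s)
    = 2 * (2 * (1 / 4 ^ s) * rzeta (2 * s)) - rzeta (2 * s) by ring, ← hE2]
  refine tsum_congr fun n => ?_
  have hn : ((n + 1 : ℕ) : ℝ) ≠ 0 := by positivity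
  have hp : ((n + 1 : ℕ) : ℝ) ^ (2 * s)
      = ((n + 1 : ℕ) : ℝ) ^ (2 * s - 2) * ((n + 1 : ℕ) : ℝ) ^ 2 := by
    rw [← pow_add]; congr 1; omega
  rw [hp]
  field_simp
  ring
end

section
/- For every integer s ≥ 3, ∑_{j=2}^{s-1} 2^j ζ(j̄, s-j) = (3 - 2^{2-s} - s) ζ(s), where ζ(j̄, s-j) = ∑_{n=1}^∞ ∑_{m=1}^{n-1} ((-1)^{n-1}/n^j)·(1/m^{s-j}). -/
/-!
Put `s = t + 2`. For fixed `m < n` the sum over `j` of `2^j / (n^j m^(s-j))` is a geometric sum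
with ratio `2m/n`. On the line `n = 2m` it equals `t / m^s`, and the sign there is always `-1`,
which gives `-t ζ(s)` (`diagPart_hasSum`). Off that line it equals
`4 / (n (2m - n)) * ((2/n)^t - (1/m)^t)` (`sum_altTerm_eq`), and the two halves are summed in
different orders.

* The half with `(2/n)^t` is summed over `m` first; it vanishes because `1 / (2m - n)` is odd under
  `m ↦ n - m` (`oddPart_tsum`).
* The half with `(1/m)^t` is summed over `n` first. By partial fractions it telescopes with step
  `2m` in the odd function `k ↦ (-1)^(k-1)/k`, with value `(1 - 2 (1 + (-1)^m)) / m^s`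
  (`telePart_column`). Summing over `m` gives `(1 - 2^(2-s)) ζ(s)` (`telePart_tsum`).

The interchanges rest on absolute convergence over pairs. The terms `1 / (n^j m^(s-j))` and those
of the first half are bounded by products of powers with exponent `-3/2` (`inv_sq_mul_le`); the
second half is then summable as a difference.
-/

open scoped BigOperators

/-! ### Summability on the index lattice -/

/-- The summand of `ζ(ā, b)`, extended by zero to all pairs `(n, m)` of natural numbers. -/
noncomputable def altTerm (a b : ℕ) (p : ℕ × ℕ) : ℝ :=
  if 0 < p.2 ∧ p.2 < p.1 then
    ((-1 : ℝ) ^ (p.1 - 1) / (p.1 : ℝ) ^ a) * (1 / (p.2 : ℝ) ^ b) else 0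

/-- This splits `1 / (x² y)` into a product of two convergent exponents, since `√(xy) ≤ x`. -/
lemma inv_sq_mul_le {x y : ℝ} (hy : 0 < y) (hyx : y ≤ x) :
    1 / (x ^ 2 * y) ≤ x ^ (-(3 / 2) : ℝ) * y ^ (-(3 / 2) : ℝ) := by
  have hx : 0 < x := hy.trans_le hyx
  have e : ∀ z : ℝ, 0 < z → z ^ (3 / 2 : ℝ) = z * √z := by
    intro z hz
    rw [show (3 / 2 : ℝ) = 1 + 1 / 2 by norm_num, Real.rpow_add hz, Real.rpow_one,
      Real.sqrt_eq_rpow]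
  rw [Real.rpow_neg hx.le, Real.rpow_neg hy.le, ← mul_inv, ← one_div, e x hx, e y hy]
  apply one_div_le_one_div_of_le (by positivity)
  have h1 : √x * √y ≤ x := by
    calc √x * √y ≤ √x * √x := by gcongr
      _ = x := Real.mul_self_sqrt hx.le
  calc x * √x * (y * √y) = x * y * (√x * √y) := by ring
    _ ≤ x * y * x := by gcongr
    _ = x ^ 2 * y := by ring

lemma altTerm_summable {a b : ℕ} (ha : 2 ≤ a) (hb : 1 ≤ b) : Summable (altTerm a b) := by
  have h1 : Summable (fun n : ℕ => (n : ℝ) ^ (-(3 / 2) : ℝ)) :=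
    Real.summable_nat_rpow.2 (by norm_num)
  have h2 := h1.mul_of_nonneg h1 (fun n => by positivity) (fun n => by positivity)
  refine Summable.of_norm_bounded h2 ?_
  rintro ⟨n, m⟩
  simp only [altTerm]
  split_ifs with h
  · obtain ⟨hm, hmn⟩ := h
    have hm1 : (1 : ℝ) ≤ m := by exact_mod_cast hm
    have hmn' : (m : ℝ) ≤ n := by exact_mod_cast hmn.le
    have hn1 : (1 : ℝ) ≤ n := hm1.trans hmn'
    refine le_trans ?_ (inv_sq_mul_le (by linarith) hmn')
    have : ‖((-1 : ℝ) ^ (n - 1) / (n : ℝ) ^ a) * (1 / (m : ℝ) ^ b)‖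
        = 1 / ((n : ℝ) ^ a * (m : ℝ) ^ b) := by
      simp [mul_comm]
    rw [this]
    apply one_div_le_one_div_of_le (by positivity)
    have e1 : (n : ℝ) ^ 2 ≤ (n : ℝ) ^ a := pow_le_pow_right₀ hn1 ha
    have e2 : (m : ℝ) ≤ (m : ℝ) ^ b := le_self_pow₀ hm1 (by omega)
    gcongr
  · simp only [norm_zero]
    positivity

lemma dzetaBA_eq_tsum {a b : ℕ} (ha : 2 ≤ a) (hb : 1 ≤ b) :
    dzetaBA a b = ∑' p, altTerm a b p := by
  rw [(altTerm_summable ha hb).tsum_prod, dzetaBA]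
  congr 1
  ext n
  rw [tsum_eq_sum (s := Finset.Ioo 0 n)]
  · refine Finset.sum_congr rfl fun m hm => ?_
    rw [altTerm, if_pos (Finset.mem_Ioo.1 hm)]
  · intro m hm
    rw [altTerm, if_neg (fun h => hm (Finset.mem_Ioo.2 h))]

/-! ### Splitting the geometric sum -/

/-- The contribution of the line `n = 2m`, where all terms of the geometric sum coincide. -/
noncomputable def diagPart (t : ℕ) (p : ℕ × ℕ) : ℝ :=
  if 2 * p.2 = p.1 then -(t : ℝ) / (p.2 : ℝ) ^ (t + 2) else 0

/-- The half of the off-diagonal closed form that carries `(2/n)^t`. It is zero on `n = 2m`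
because division by zero gives zero. -/
noncomputable def oddPart (t : ℕ) (p : ℕ × ℕ) : ℝ :=
  if 0 < p.2 ∧ p.2 < p.1 then
    (-1 : ℝ) ^ (p.1 - 1) * (4 / p.1) * (2 / p.1) ^ t * (1 / (2 * (p.2 : ℝ) - p.1)) else 0

/-- The half of the off-diagonal closed form that carries `(1/m)^t`. It is zero on `n = 2m`
because division by zero gives zero. -/
noncomputable def telePart (t : ℕ) (p : ℕ × ℕ) : ℝ :=
  if 0 < p.2 ∧ p.2 < p.1 then
    -((-1 : ℝ) ^ (p.1 - 1) * (4 / p.1) * (1 / p.2) ^ t * (1 / (2 * (p.2 : ℝ) - p.1))) else 0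

lemma sum_altTerm_eq (t : ℕ) (p : ℕ × ℕ) :
    ∑ j ∈ Finset.Icc 2 (t + 1), (2 : ℝ) ^ j * altTerm j (t + 2 - j) p
      = diagPart t p + oddPart t p + telePart t p := by
  obtain ⟨n, m⟩ := p
  by_cases h : 0 < m ∧ m < n
  swap
  · have h0 : diagPart t (n, m) = 0 := by
      simp only [diagPart]
      split_ifs with h2
      · have : m = 0 := by omega
        simp [this]
      · rfl
    simp [altTerm, oddPart, telePart, h, h0]
  have hm : (m : ℝ) ≠ 0 := by exact_mod_cast h.1.ne'
  have hn : (n : ℝ) ≠ 0 := by exact_mod_cast (h.1.trans h.2).ne'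
  have key : ∑ j ∈ Finset.Icc 2 (t + 1), (2 : ℝ) ^ j * altTerm j (t + 2 - j) (n, m)
      = (-1) ^ (n - 1) * ((2 / n : ℝ) ^ 2 * (1 / m) *
        ∑ i ∈ Finset.range t, (2 / n : ℝ) ^ i * (1 / m) ^ (t - 1 - i)) := by
    rw [show Finset.Icc 2 (t + 1) = Finset.Ico 2 (t + 2) by ext; simp; omega,
      Finset.sum_Ico_eq_sum_range, Finset.mul_sum, Finset.mul_sum]
    refine Finset.sum_congr (by simp) fun i hi => ?_
    have hi' : i < t := by simpa using hi
    rw [altTerm, if_pos h]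
    obtain ⟨k, rfl⟩ : ∃ k, t = i + k + 1 := ⟨t - i - 1, by omega⟩
    rw [show i + k + 1 + 2 - (2 + i) = k + 1 by omega, show i + k + 1 - 1 - i = k by omega]
    simp only [div_pow, one_pow]
    field_simp
    ring
  rw [key]
  by_cases h2 : 2 * m = n
  · have hn2 : (n : ℝ) = 2 * m := by exact_mod_cast h2.symm
    have e : (2 / n : ℝ) = 1 / m := by rw [hn2]; field_simp
    have e2 : ∑ i ∈ Finset.range t, (1 / m : ℝ) ^ i * (1 / m) ^ (t - 1 - i)
        = t * (1 / m) ^ (t - 1) := by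
      rw [← nsmul_eq_mul, ← Finset.card_range t, ← Finset.sum_const, Finset.card_range]
      refine Finset.sum_congr rfl fun i hi => ?_
      have hi' : i < t := by simpa using hi
      rw [← pow_add]
      congr 1
      omega
    have e3 : (-1 : ℝ) ^ (n - 1) = -1 := by
      apply Odd.neg_one_pow
      exact ⟨m - 1, by omega⟩
    simp only [diagPart, oddPart, telePart, if_pos h, if_pos h2]
    rw [e, e2, e3, hn2]
    rcases t with _ | t
    · simp
    · simp
      field_simp
      ring
  · have hne : (2 * (m : ℝ) - n) ≠ 0 := by
      rw [sub_ne_zero]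
      exact_mod_cast h2
    have hg := geom_sum₂_mul (2 / n : ℝ) (1 / m) t
    have hd : (2 / n - 1 / m : ℝ) = (2 * m - n) / (n * m) := by field_simp
    have hG : ∑ i ∈ Finset.range t, (2 / n : ℝ) ^ i * (1 / m) ^ (t - 1 - i)
        = ((2 / n : ℝ) ^ t - (1 / m) ^ t) * (n * m / (2 * m - n)) := by
      rw [← hg, hd]
      field_simp
    simp only [diagPart, oddPart, telePart, if_pos h, if_neg h2]
    rw [hG]
    generalize (2 / n : ℝ) ^ t = X
    generalize (1 / m : ℝ) ^ t = Y
    field_simp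
    ring

/-! ### The line `n = 2m` -/

lemma summable_rzeta {s : ℕ} (hs : 2 ≤ s) : Summable (fun n : ℕ => 1 / (n : ℝ) ^ s) :=
  Real.summable_one_div_nat_pow.2 (by omega)

lemma diagPart_hasSum (t : ℕ) : HasSum (diagPart t) (-(t : ℝ) * rzeta (t + 2)) := by
  have hi : Function.Injective (fun m : ℕ => (2 * m, m)) := fun a b h => (Prod.mk.inj h).2
  have h0 : ∀ p ∉ Set.range (fun m : ℕ => (2 * m, m)), diagPart t p = 0 := by
    rintro ⟨n, m⟩ hp
    simp only [diagPart]
    rw [if_neg]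
    rintro rfl
    exact hp ⟨m, rfl⟩
  rw [← hi.hasSum_iff h0]
  have e : (diagPart t ∘ fun m : ℕ => (2 * m, m))
      = fun m : ℕ => -(t : ℝ) * (1 / (m : ℝ) ^ (t + 2)) := by
    funext m
    simp [diagPart, div_eq_mul_inv]
  rw [e]
  exact ((summable_rzeta (s := t + 2) (by omega)).hasSum).mul_left (-(t : ℝ))

/-! ### The antisymmetric part -/

lemma oddPart_summable {t : ℕ} (ht : 1 ≤ t) : Summable (oddPart t) := by
  have h1 : Summable (fun n : ℕ => (n : ℝ) ^ (-(3 / 2) : ℝ)) :=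
    Real.summable_nat_rpow.2 (by norm_num)
  have h1' : Summable (fun n : ℤ => |(n : ℝ)| ^ (-(3 / 2) : ℝ)) :=
    Real.summable_abs_int_rpow (by norm_num)
  have h2 := h1.mul_of_nonneg h1' (fun n => by positivity) (fun n => by positivity)
  have hi : Function.Injective (fun p : ℕ × ℕ => (p.1, 2 * (p.2 : ℤ) - p.1)) := by
    rintro ⟨a, b⟩ ⟨c, d⟩ h
    simp only [Prod.mk.injEq] at h ⊢
    omega
  refine Summable.of_norm_bounded ((h2.comp_injective hi).mul_left (4 * 2 ^ t)) ?_
  rintro ⟨n, m⟩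
  simp only [oddPart, Function.comp]
  split_ifs with h
  swap
  · simp only [norm_zero]
    positivity
  by_cases h2 : 2 * m = n
  · have hn2 : (n : ℝ) = 2 * m := by exact_mod_cast h2.symm
    rw [hn2]
    simp
    positivity
  have hn1 : (1 : ℝ) ≤ n := by exact_mod_cast (by omega : 1 ≤ n)
  have hne : (2 * (m : ℝ) - n) ≠ 0 := by
    rw [sub_ne_zero]
    exact_mod_cast h2
  have hle : |2 * (m : ℝ) - n| ≤ n := by
    have : (m : ℝ) ≤ n := by exact_mod_cast h.2.le
    rw [abs_le]
    constructor <;> linarith [(Nat.cast_nonneg m : (0 : ℝ) ≤ m)]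
  have hb := inv_sq_mul_le (abs_pos.2 hne) hle
  push_cast
  refine le_trans ?_ (mul_le_mul_of_nonneg_left hb (by positivity))
  have e : ‖(-1 : ℝ) ^ (n - 1) * (4 / n) * (2 / n) ^ t * (1 / (2 * (m : ℝ) - n))‖
      = 4 * 2 ^ t * (1 / ((n : ℝ) ^ (t + 1) * |2 * (m : ℝ) - n|)) := by
    simp only [norm_mul, norm_pow, norm_neg, norm_one, one_pow, norm_div, Real.norm_eq_abs,
      Nat.abs_cast, Nat.abs_ofNat, div_pow]
    have := abs_pos.2 hne
    field_simp
    ring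
  rw [e]
  have := abs_pos.2 hne
  have e1 : (n : ℝ) ^ 2 ≤ (n : ℝ) ^ (t + 1) := pow_le_pow_right₀ hn1 (by omega)
  gcongr

/-- For fixed `n` the reflection `m ↦ n - m` changes the sign of every term. -/
lemma oddPart_tsum {t : ℕ} (ht : 1 ≤ t) : ∑' p, oddPart t p = 0 := by
  rw [(oddPart_summable ht).tsum_prod]
  convert tsum_zero with n
  rw [tsum_eq_sum (s := Finset.Ioo 0 n)]
  · have : ∑ m ∈ Finset.Ioo 0 n, oddPart t (n, m)
        = ∑ m ∈ Finset.Ioo 0 n, -oddPart t (n, m) := by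
      refine Finset.sum_nbij' (fun m => n - m) (fun m => n - m) ?_ ?_ ?_ ?_ ?_
      · intro m hm; simp at hm ⊢; omega
      · intro m hm; simp at hm ⊢; omega
      · intro m hm; simp at hm ⊢; omega
      · intro m hm; simp at hm ⊢; omega
      · intro m hm
        simp only [Finset.mem_Ioo] at hm
        have h' : 0 < n - m ∧ n - m < n := by omega
        simp only [oddPart, if_pos hm, if_pos h']
        rw [Nat.cast_sub hm.2.le,
          show 2 * ((n : ℝ) - m) - n = -(2 * (m : ℝ) - n) by ring, one_div_neg_eq_neg_one_div]
        ring
    rw [Finset.sum_neg_distrib] at this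
    linarith
  · intro m hm
    simp only [oddPart]
    rw [if_neg (fun h => hm (Finset.mem_Ioo.2 h))]

/-! ### The telescoping part -/

/-- The odd function `k ↦ (-1)^(k-1)/k` on the integers, with value `0` at `0`. -/
noncomputable def altInv (k : ℤ) : ℝ := -(-1 : ℝ) ^ k / k

lemma altInv_neg (k : ℤ) : altInv (-k) = -altInv k := by
  have h : ((-1 : ℝ) ^ k)⁻¹ = (-1 : ℝ) ^ k := by
    rw [← inv_zpow]
    norm_num
  simp [altInv, div_neg, h]

lemma altInv_tendsto (c : ℤ) :
    Filter.Tendsto (fun N : ℕ => altInv (c + N)) Filter.atTop (nhds 0) := by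
  have h : Filter.Tendsto (fun N : ℕ => ((c + N : ℤ) : ℝ)) Filter.atTop Filter.atTop := by
    push_cast
    exact Filter.tendsto_atTop_add_const_left _ _ tendsto_natCast_atTop_atTop
  refine squeeze_zero_norm (fun N => ?_) (tendsto_norm_zero.comp (tendsto_inv_atTop_zero.comp h))
  simp [altInv]

lemma sum_altInv_window (m : ℕ) (hm : 0 < m) :
    ∑ i ∈ Finset.range (2 * m), altInv (1 - m + i) = altInv m := by
  obtain ⟨k, rfl⟩ : ∃ k, m = k + 1 := ⟨m - 1, by omega⟩
  clear hm
  induction k with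
  | zero => simp [Finset.sum_range_succ, altInv]
  | succ k ih =>
    rw [show 2 * (k + 1 + 1) = 2 * (k + 1) + 1 + 1 by ring, Finset.sum_range_succ,
      Finset.sum_range_succ']
    have e : ∀ i : ℕ, (1 - ((k + 1 + 1 : ℕ) : ℤ) + ((i + 1 : ℕ) : ℤ))
        = 1 - ((k + 1 : ℕ) : ℤ) + i := by intro i; push_cast; ring
    simp only [e]
    rw [ih]
    have e1 : (1 - ((k + 1 + 1 : ℕ) : ℤ) + ((0 : ℕ) : ℤ)) = -((k + 1 : ℕ) : ℤ) := by
      push_cast; ring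
    have e2 : (1 - ((k + 1 + 1 : ℕ) : ℤ) + ((2 * (k + 1) + 1 : ℕ) : ℤ))
        = ((k + 1 + 1 : ℕ) : ℤ) := by push_cast; ring
    rw [e] at e2
    rw [e1, e2, altInv_neg]
    ring

lemma sum_sub_shift (f : ℕ → ℝ) (d N : ℕ) :
    ∑ i ∈ Finset.range N, (f i - f (i + d))
      = ∑ i ∈ Finset.range d, f i - ∑ i ∈ Finset.range d, f (i + N) := by
  have h1 := Finset.sum_range_add f N d
  have h2 := Finset.sum_range_add f d N
  rw [add_comm d N] at h2
  rw [Finset.sum_sub_distrib]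
  simp only [add_comm _ d, add_comm _ N]
  linarith

/-- Partial fractions: off the line `n = 2m` the term is a difference of `altInv` at distance
`2m`; the last summand removes the spurious value `-altInv (2m)` at `n = 2m`. -/
lemma telePart_eq (t m i : ℕ) (hm : 0 < m) :
    telePart t (m + 1 + i, m) = (2 / m) * (1 / m) ^ t *
      ((altInv (1 - m + i) - altInv (1 - m + ((i + 2 * m : ℕ) : ℤ)))
        - if i = m - 1 then 1 / (2 * (m : ℝ)) else 0) := by
  have hm' : (m : ℝ) ≠ 0 := by exact_mod_cast hm.ne'
  simp only [telePart]
  rw [if_pos (by omega)]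
  have e1 : (-1 : ℝ) ^ (m + 1 + i - 1) = (-1 : ℝ) ^ (m + i) := by
    congr 1
    omega
  have e2 : (-1 : ℝ) ^ (1 - (m : ℤ) + i) = -(-1 : ℝ) ^ (m + i) := by
    rw [show (1 - (m : ℤ) + i) = ((m + i : ℕ) : ℤ) + 1 + 2 * (-(m : ℤ)) by push_cast; ring,
      zpow_add₀ (by norm_num), zpow_mul, zpow_add₀ (by norm_num), zpow_natCast]
    norm_num
  have e3 : (-1 : ℝ) ^ (1 - (m : ℤ) + ((i + 2 * m : ℕ) : ℤ)) = -(-1 : ℝ) ^ (m + i) := by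
    rw [show (1 - (m : ℤ) + ((i + 2 * m : ℕ) : ℤ)) = ((m + i : ℕ) : ℤ) + 1 by push_cast; ring,
      zpow_add₀ (by norm_num), zpow_natCast]
    norm_num
  simp only [altInv]
  rw [e1, e2, e3]
  generalize (1 / m : ℝ) ^ t = Y
  have hp : (1 - (m : ℝ) + (i + 2 * m)) ≠ 0 := by
    have : (0 : ℝ) < 1 - (m : ℝ) + (i + 2 * m) := by
      have : (0 : ℝ) ≤ m := Nat.cast_nonneg m
      have : (0 : ℝ) ≤ i := Nat.cast_nonneg i
      linarith
    exact this.ne'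
  have hp' : ((m : ℝ) + 1 + i) ≠ 0 := by
    convert hp using 1
    ring
  split_ifs with hi
  · have hmi : m = i + 1 := by omega
    have s1 : (-1 : ℝ) ^ (m + i) = -1 := Odd.neg_one_pow ⟨i, by omega⟩
    rw [s1]
    push_cast
    have : (i : ℝ) = m - 1 := by rw [hmi]; push_cast; ring
    rw [this]
    have z : (1 - (m : ℝ) + (m - 1)) = 0 := by ring
    have z' : (2 * (m : ℝ) - (m + 1 + (m - 1))) = 0 := by ring
    rw [z, z']
    have z2 : (1 - (m : ℝ) + (m - 1 + 2 * m)) = 2 * m := by ring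
    rw [z2]
    simp only [div_zero, mul_zero, neg_zero, zero_sub]
    field_simp
    norm_num
  · have hq : (1 - (m : ℝ) + i) ≠ 0 := by
      intro h0
      apply hi
      have : ((i + 1 : ℕ) : ℝ) = m := by push_cast; linarith
      have : i + 1 = m := by exact_mod_cast this
      omega
    generalize (-1 : ℝ) ^ (m + i) = S
    push_cast
    rw [show (2 * (m : ℝ) - (m + 1 + i)) = -(1 - (m : ℝ) + i) by ring,
      show (1 - (m : ℝ) + (i + 2 * m)) = m + 1 + i by ring]
    field_simp
    ring

lemma telePart_partial_sum (t m N : ℕ) (hm : 0 < m) (hN : m ≤ N) :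
    ∑ i ∈ Finset.range N, telePart t (i + (m + 1), m) = (2 / m) * (1 / m : ℝ) ^ t *
      ((altInv m - ∑ i ∈ Finset.range (2 * m), altInv ((1 - m + i) + N)) - 1 / (2 * (m : ℝ))) := by
  have e : ∀ i, telePart t (i + (m + 1), m) = (2 / m) * (1 / m) ^ t *
      ((altInv (1 - m + i) - altInv (1 - m + ((i + 2 * m : ℕ) : ℤ)))
        - if i = m - 1 then 1 / (2 * (m : ℝ)) else 0) := fun i => by
    rw [add_comm i, telePart_eq t m i hm]
  have h1 : ∑ i ∈ Finset.range N, (if i = m - 1 then 1 / (2 * (m : ℝ)) else 0)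
      = 1 / (2 * (m : ℝ)) := by
    rw [Finset.sum_ite_eq', if_pos]
    rw [Finset.mem_range]
    omega
  have h2 := sum_sub_shift (fun i => altInv (1 - m + i)) (2 * m) N
  rw [sum_altInv_window m hm] at h2
  rw [Finset.sum_congr rfl fun i _ => e i, ← Finset.mul_sum, Finset.sum_sub_distrib, h1, h2]
  simp only [Nat.cast_add, add_assoc]

lemma telePart_limit_value (t m : ℕ) (hm : (m : ℝ) ≠ 0) :
    (2 / m) * (1 / m : ℝ) ^ t * (altInv m - 0 - 1 / (2 * (m : ℝ)))
      = 1 / (m : ℝ) ^ (t + 2) - 2 * ((1 + (-1 : ℝ) ^ m) / (m : ℝ) ^ (t + 2)) := by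
  simp only [altInv, zpow_natCast, Int.cast_natCast, one_div, inv_pow]
  generalize (-1 : ℝ) ^ m = S
  field_simp
  ring

/-- For fixed `m > 0` the sum over `n` telescopes, leaving `altInv m` and the correction from
`n = 2m`. For `m = 0` both sides are zero. -/
lemma telePart_column {t : ℕ} (h : Summable (telePart t)) (m : ℕ) :
    ∑' n, telePart t (n, m)
      = 1 / (m : ℝ) ^ (t + 2) - 2 * ((1 + (-1 : ℝ) ^ m) / (m : ℝ) ^ (t + 2)) := by
  rcases Nat.eq_zero_or_pos m with rfl | hm
  · have : ∀ n, telePart t (n, 0) = 0 := fun n => by simp [telePart]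
    simp [this]
  have hs : Summable (fun n => telePart t (n, m)) :=
    h.comp_injective (i := fun n : ℕ => (n, m)) fun a b hab => (Prod.mk.inj hab).1
  have h0 : ∑ n ∈ Finset.range (m + 1), telePart t (n, m) = 0 := by
    refine Finset.sum_eq_zero fun n hn => ?_
    rw [Finset.mem_range] at hn
    simp only [telePart]
    rw [if_neg]
    omega
  have hshift := hs.sum_add_tsum_nat_add (m + 1)
  rw [h0, zero_add] at hshift
  rw [← hshift, ← telePart_limit_value t m (by exact_mod_cast hm.ne')]
  have hs' : Summable (fun i => telePart t (i + (m + 1), m)) :=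
    hs.comp_injective (i := fun i : ℕ => i + (m + 1)) (add_left_injective (m + 1))
  have hz : Filter.Tendsto (fun N : ℕ => ∑ i ∈ Finset.range (2 * m), altInv ((1 - m + i) + N))
      Filter.atTop (nhds 0) := by
    have := tendsto_finsetSum (Finset.range (2 * m))
      fun (i : ℕ) _ => altInv_tendsto (1 - (m : ℤ) + i)
    rwa [Finset.sum_const_zero] at this
  refine tendsto_nhds_unique hs'.hasSum.tendsto_sum_nat ?_
  refine (((hz.const_sub (altInv m)).sub_const (1 / (2 * (m : ℝ)))).const_mul
    ((2 / m) * (1 / m : ℝ) ^ t)).congr' ?_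
  filter_upwards [Filter.eventually_ge_atTop m] with N hN
  exact (telePart_partial_sum t m N hm hN).symm

/-- The odd indices drop out and the even ones give `2 / (2m)^s`. -/
lemma tsum_even_part {s : ℕ} (hs : 2 ≤ s) :
    HasSum (fun m : ℕ => (1 + (-1 : ℝ) ^ m) / (m : ℝ) ^ s) (2 / 2 ^ s * rzeta s) := by
  have hi : Function.Injective (fun m : ℕ => 2 * m) := fun a b h => by simpa using h
  have h0 : ∀ n ∉ Set.range (fun m : ℕ => 2 * m), (1 + (-1 : ℝ) ^ n) / (n : ℝ) ^ s = 0 := by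
    intro n hn
    have : Odd n := by
      rw [← Nat.not_even_iff_odd]
      rintro ⟨k, hk⟩
      exact hn ⟨k, by simp; omega⟩
    simp [this.neg_one_pow]
  rw [← hi.hasSum_iff h0]
  have e : ((fun n : ℕ => (1 + (-1 : ℝ) ^ n) / (n : ℝ) ^ s) ∘ fun m : ℕ => 2 * m)
      = fun m : ℕ => (2 / 2 ^ s : ℝ) * (1 / (m : ℝ) ^ s) := by
    funext m
    have h1 : (-1 : ℝ) ^ (2 * m) = 1 := Even.neg_one_pow ⟨m, by ring⟩
    simp only [Function.comp, h1, Nat.cast_mul, Nat.cast_ofNat, mul_pow]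
    rw [div_mul_div_comm, mul_one]
    norm_num
  rw [e]
  exact ((summable_rzeta hs).hasSum).mul_left (2 / 2 ^ s : ℝ)

lemma telePart_tsum {t : ℕ} (h : Summable (telePart t)) :
    ∑' p, telePart t p = (1 - 2 * (2 / 2 ^ (t + 2))) * rzeta (t + 2) := by
  have e : ∑' p, telePart t p = ∑' m, ∑' n, telePart t (n, m) := by
    rw [h.tsum_prod]
    exact Summable.tsum_comm (f := fun m n => telePart t (n, m)) h.prod_symm
  rw [e]
  simp only [telePart_column h]
  have h1 := (summable_rzeta (s := t + 2) (by omega)).hasSum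
  have h2 := (tsum_even_part (s := t + 2) (by omega)).mul_left 2
  rw [(h1.sub h2).tsum_eq, rzeta]
  ring

theorem stmt18 (s : ℕ) (hs : 3 ≤ s) :
    ∑ j ∈ Finset.Icc 2 (s - 1), (2 : ℝ) ^ j * dzetaBA j (s - j)
      = (3 - (2 : ℝ) ^ (2 - (s : ℤ)) - (s : ℝ)) * rzeta s := by
  obtain ⟨t, rfl⟩ : ∃ t, s = t + 2 := ⟨s - 2, by omega⟩
  have ht : 1 ≤ t := by omega
  rw [show t + 2 - 1 = t + 1 by omega]
  have hsum : ∀ j ∈ Finset.Icc 2 (t + 1),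
      Summable (fun p => (2 : ℝ) ^ j * altTerm j (t + 2 - j) p) := by
    intro j hj
    rw [Finset.mem_Icc] at hj
    exact (altTerm_summable hj.1 (by omega)).mul_left _
  have e1 : ∑ j ∈ Finset.Icc 2 (t + 1), (2 : ℝ) ^ j * dzetaBA j (t + 2 - j)
      = ∑' p, (diagPart t p + oddPart t p + telePart t p) := by
    simp only [← sum_altTerm_eq]
    rw [Summable.tsum_finsetSum hsum]
    refine Finset.sum_congr rfl fun j hj => ?_
    rw [Finset.mem_Icc] at hj
    rw [tsum_mul_left, dzetaBA_eq_tsum hj.1 (by omega)]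
  have hD := diagPart_hasSum t
  have hP := oddPart_summable ht
  -- The telescoping part is summable as the difference of the whole and the other two parts.
  have hQ : Summable (telePart t) := by
    have h := ((summable_sum hsum).sub hD.summable).sub hP
    refine h.congr fun p => ?_
    simp only [sum_altTerm_eq]
    ring
  rw [e1, (hD.summable.add hP).tsum_add hQ, hD.summable.tsum_add hP, hD.tsum_eq,
    oddPart_tsum ht, telePart_tsum hQ]
  have e2 : (2 : ℝ) ^ (2 - ((t + 2 : ℕ) : ℤ)) = 2 * (2 / 2 ^ (t + 2)) := by
    rw [show (2 - ((t + 2 : ℕ) : ℤ)) = -(t : ℤ) by push_cast; ring, zpow_neg, zpow_natCast, pow_add]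
    field_simp
  rw [e2]
  push_cast
  ring
end

section
/- For every integer n ≥ 4, ∑_{j=2}^{n-2} (j-1)(2j-1)(n-j-1)(2n-2j-1) ζ(2j, 2n-2j) = (3/8)(n-1)(3n-2) ζ(2n) - 3(2n-5) ζ(4) ζ(2n-4). -/
/-!
The weight `(j-1)(2j-1)(n-j-1)(2n-2j-1)` is symmetric under `j ↦ n - j`, so the stuffle relation
`ζ(a,b) + ζ(b,a) = ζ(a)ζ(b) - ζ(a+b)` (`dzeta_stuffle`) reduces the claim to a weighted convolution
formula for the products `ζ(2j)ζ(2n-2j)` (`zeta_convolution`).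

Up to the factor `(-1)^j (2π)^{2j}`, the even zeta values are the coefficients of
`F = -(t/4) coth(t/2)`, whose constant term plays the role of `ζ(0) = -1/2` (`rzeta_eq_coeff`).
With `D = t d/dt` and `P = -t²/8`, the series `F` satisfies the Riccati equation
`D F = F + 2F² + P` (`eulerD_cothSeries`), a consequence of `B(e^t - 1) = t` for the Bernoulli
series `B`. Hence every `(D-k)⋯(D-1)F` is a polynomial in `F` and `P`, and comparing these
polynomials gives
`(D-5)(D-4)(D-3)(D-2)(D-1)F = 60 ((D-2)(D-1)F)² + t⁴ (D-1)F` (`cothSeries_quintic`).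
The coefficient of `t^{2n}` in this identity is the convolution formula: the coefficients of
`(D-2)(D-1)F` are `(2j-1)(2j-2)` times those of `F`, and `ζ(4) = π⁴/90` absorbs the last term.
-/

open scoped BigOperators

namespace EvenZeta

open PowerSeries Filter Topology

/-! ### The stuffle relation -/

lemma sum_range_mul_sum_range (f g : ℕ → ℝ) (N : ℕ) :
    (∑ n ∈ Finset.range N, f n * ∑ m ∈ Finset.range n, g m)
      + (∑ n ∈ Finset.range N, g n * ∑ m ∈ Finset.range n, f m)
      + ∑ n ∈ Finset.range N, f n * g n
      = (∑ n ∈ Finset.range N, f n) * ∑ n ∈ Finset.range N, g n := by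
  induction N with
  | zero => simp
  | succ N ih =>
    simp only [Finset.sum_range_succ]
    linear_combination ih

lemma summable_mul_sum_range (f g : ℕ → ℝ) (hf : Summable f) (hg : Summable g)
    (hf0 : ∀ n, 0 ≤ f n) (hg0 : ∀ n, 0 ≤ g n) :
    Summable fun n => f n * ∑ m ∈ Finset.range n, g m := by
  refine Summable.of_nonneg_of_le (fun n => mul_nonneg (hf0 n) (Finset.sum_nonneg fun i _ => hg0 i))
    (fun n => ?_) (hf.mul_right (∑' m, g m))
  exact mul_le_mul_of_nonneg_left (hg.sum_le_tsum _ fun i _ => hg0 i) (hf0 n)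

lemma dzeta_eq (a b : ℕ) (hb : b ≠ 0) :
    dzeta a b = ∑' n : ℕ, 1 / (n : ℝ) ^ a * ∑ m ∈ Finset.range n, 1 / (m : ℝ) ^ b := by
  unfold dzeta
  congr 1
  ext n
  rw [Finset.mul_sum]
  -- the term `m = 0` of the right-hand side is the junk value `1 / 0 = 0`
  refine Finset.sum_subset_zero_on_sdiff (fun m hm => ?_) (fun m hm => ?_) (fun m _ => ?_)
  · simp at hm ⊢; omega
  · have : m = 0 := by simp at hm; omega
    simp [this, hb]
  · rw [one_div_mul_one_div]

lemma dzeta_stuffle (a b : ℕ) (ha : 2 ≤ a) (hb : 2 ≤ b) :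
    dzeta a b + dzeta b a = rzeta a * rzeta b - rzeta (a + b) := by
  rw [dzeta_eq a b (by omega), dzeta_eq b a (by omega)]
  unfold rzeta
  have hs : ∀ k : ℕ, 2 ≤ k → Summable fun n : ℕ => 1 / (n : ℝ) ^ k := fun k hk =>
    Real.summable_one_div_nat_pow.2 (by omega)
  have h0 : ∀ k n : ℕ, 0 ≤ 1 / (n : ℝ) ^ k := fun k n => by positivity
  have h1 := (summable_mul_sum_range _ _ (hs a ha) (hs b hb) (h0 a) (h0 b)).hasSum.tendsto_sum_nat
  have h2 := (summable_mul_sum_range _ _ (hs b hb) (hs a ha) (h0 b) (h0 a)).hasSum.tendsto_sum_nat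
  have h3 := (hs (a + b) (by omega)).hasSum.tendsto_sum_nat
  have h4 := (hs a ha).hasSum.tendsto_sum_nat.mul (hs b hb).hasSum.tendsto_sum_nat
  have h5 := tendsto_nhds_unique ((h1.add h2).add h3) (h4.congr fun N => ?_)
  · linear_combination h5
  · rw [← sum_range_mul_sum_range]
    simp only [pow_add, one_div_mul_one_div]

/-! ### The series `-(t/4) coth(t/2)` and its Riccati equation -/

/-- The Euler derivation `t d/dt` on real power series. -/
noncomputable def eulerD : Derivation ℝ ℝ⟦X⟧ ℝ⟦X⟧ := (X : ℝ⟦X⟧) • d⁄dX ℝ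

/-- The power series `-(t/4) coth(t/2)`, written through the Bernoulli series
`t/(e^t - 1) = (t/2) coth(t/2) - t/2`. -/
noncomputable def cothSeries : ℝ⟦X⟧ := C (-1 / 2) * bernoulliPowerSeries ℝ - C (1 / 4) * X

/-- The series `-t²/8`, the inhomogeneous term of the Riccati equation of `cothSeries`. -/
noncomputable def quadTerm : ℝ⟦X⟧ := C (-1 / 8) * X ^ 2

lemma eulerD_apply (f : ℝ⟦X⟧) : eulerD f = X * d⁄dX ℝ f := by
  simp [eulerD]

lemma coeff_eulerD (f : ℝ⟦X⟧) (k : ℕ) : coeff k (eulerD f) = k * coeff k f := by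
  rw [eulerD_apply]
  cases k with
  | zero => simp
  | succ k => rw [coeff_succ_X_mul, coeff_derivative]; push_cast; ring

lemma eulerD_bernoulli :
    eulerD (bernoulliPowerSeries ℝ)
      = bernoulliPowerSeries ℝ - bernoulliPowerSeries ℝ * (X + bernoulliPowerSeries ℝ) := by
  have h1 := bernoulliPowerSeries_mul_exp_sub_one ℝ
  have h2 := congrArg (d⁄dX ℝ) h1
  rw [Derivation.leibniz, map_sub, derivative_exp, derivative_X, derivative_one] at h2
  simp only [smul_eq_mul, sub_zero] at h2
  rw [eulerD_apply]
  set B := bernoulliPowerSeries ℝ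
  linear_combination B * h2 - (d⁄dX ℝ) B * h1 - B * h1

lemma eulerD_C (r : ℝ) : eulerD (C r) = 0 := by simp [eulerD_apply]

lemma eulerD_X : eulerD X = X := by simp [eulerD_apply]

lemma eulerD_ofNat (n : ℕ) [n.AtLeastTwo] : eulerD (no_index (OfNat.ofNat n : ℝ⟦X⟧)) = 0 := by
  rw [← map_ofNat (C (R := ℝ))]; exact eulerD_C _

lemma eulerD_quadTerm : eulerD quadTerm = 2 * quadTerm := by
  unfold quadTerm
  simp only [Derivation.leibniz, eulerD_C, pow_two, eulerD_X, smul_eq_mul]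
  ring

lemma sq_quadTerm : 64 * quadTerm ^ 2 = X ^ 4 := by
  have h : (64 : ℝ⟦X⟧) * C (-1 / 8 : ℝ) ^ 2 = 1 := by
    rw [← map_ofNat (C (R := ℝ)), ← map_pow, ← map_mul]; norm_num
  unfold quadTerm
  linear_combination X ^ 4 * h

lemma eulerD_cothSeries :
    eulerD cothSeries = cothSeries + 2 * cothSeries ^ 2 + quadTerm := by
  have h4 : (C (1 / 4) : ℝ⟦X⟧) * 4 = 1 := by
    rw [← map_ofNat (C (R := ℝ)), ← map_mul]; norm_num
  have h2 : (C (-1 / 2) : ℝ⟦X⟧) = -2 * C (1 / 4) := by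
    rw [← map_ofNat (C (R := ℝ)), ← map_neg, ← map_mul]; norm_num
  have h8 : (C (-1 / 8) : ℝ⟦X⟧) = -2 * C (1 / 4) ^ 2 := by
    rw [← map_ofNat (C (R := ℝ)), ← map_neg, ← map_pow, ← map_mul]; norm_num
  unfold cothSeries quadTerm
  rw [map_sub, Derivation.leibniz, Derivation.leibniz, eulerD_C, eulerD_C, eulerD_X,
    eulerD_bernoulli, h2, h8]
  simp only [smul_eq_mul]
  set B := bernoulliPowerSeries ℝ
  set c : ℝ⟦X⟧ := C (1 / 4)
  linear_combination (-2 * c * B ^ 2 - 2 * c * B * X) * h4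

/-- The operator `(D - k)` with `D = t d/dt`, multiplying the `i`-th coefficient by `i - k`. -/
noncomputable def shiftD (k : ℕ) (f : ℝ⟦X⟧) : ℝ⟦X⟧ := eulerD f - C (k : ℝ) * f

lemma coeff_shiftD (k i : ℕ) (f : ℝ⟦X⟧) :
    coeff i (shiftD k f) = ((i : ℝ) - k) * coeff i f := by
  rw [shiftD, map_sub, coeff_eulerD, coeff_C_mul]; ring

lemma shiftD_one : shiftD 1 cothSeries = 2 * cothSeries ^ 2 + quadTerm := by
  rw [shiftD, eulerD_cothSeries]
  simp only [Nat.cast_one, map_one]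
  ring

lemma shiftD_two :
    shiftD 2 (shiftD 1 cothSeries) = 8 * cothSeries ^ 3 + 4 * cothSeries * quadTerm := by
  rw [shiftD_one, shiftD]
  simp only [map_natCast, map_add, Derivation.leibniz, Derivation.leibniz_pow, eulerD_ofNat,
    eulerD_cothSeries, eulerD_quadTerm, smul_eq_mul, nsmul_eq_mul]
  push_cast
  ring

lemma shiftD_five :
    shiftD 5 (shiftD 4 (shiftD 3 (shiftD 2 (shiftD 1 cothSeries))))
      = 3840 * cothSeries ^ 6 + 3840 * cothSeries ^ 4 * quadTerm
        + 1088 * cothSeries ^ 2 * quadTerm ^ 2 + 64 * quadTerm ^ 3 := by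
  have h3 : shiftD 3 (shiftD 2 (shiftD 1 cothSeries))
      = 48 * cothSeries ^ 4 + 32 * cothSeries ^ 2 * quadTerm + 4 * quadTerm ^ 2 := by
    rw [shiftD_two, shiftD]
    simp only [map_natCast, map_add, Derivation.leibniz, Derivation.leibniz_pow, eulerD_ofNat,
      eulerD_cothSeries, eulerD_quadTerm, smul_eq_mul, nsmul_eq_mul]
    push_cast
    ring
  have h4 : shiftD 4 (shiftD 3 (shiftD 2 (shiftD 1 cothSeries)))
      = 384 * cothSeries ^ 5 + 320 * cothSeries ^ 3 * quadTerm
        + 64 * cothSeries * quadTerm ^ 2 := by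
    rw [h3, shiftD]
    simp only [map_natCast, map_add, Derivation.leibniz, Derivation.leibniz_pow, eulerD_ofNat,
      eulerD_cothSeries, eulerD_quadTerm, smul_eq_mul, nsmul_eq_mul]
    push_cast
    ring
  rw [h4, shiftD]
  simp only [map_natCast, map_add, Derivation.leibniz, Derivation.leibniz_pow, eulerD_ofNat,
    eulerD_cothSeries, eulerD_quadTerm, smul_eq_mul, nsmul_eq_mul]
  push_cast
  ring

lemma cothSeries_quintic :
    shiftD 5 (shiftD 4 (shiftD 3 (shiftD 2 (shiftD 1 cothSeries))))
      = C 60 * (shiftD 2 (shiftD 1 cothSeries) * shiftD 2 (shiftD 1 cothSeries))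
        + X ^ 4 * shiftD 1 cothSeries := by
  rw [shiftD_five, shiftD_two, shiftD_one, ← sq_quadTerm, map_ofNat]
  ring

/-! ### Coefficients and zeta values -/

lemma coeff_cothSeries_odd (k : ℕ) (hk : Odd k) : coeff k cothSeries = 0 := by
  rw [cothSeries, map_sub, coeff_C_mul, coeff_C_mul, coeff_X, bernoulliPowerSeries, coeff_mk]
  by_cases h : k = 1
  · subst h; norm_num
  · have : 1 < k := by have := hk.pos; omega
    simp [h, bernoulli_eq_zero_of_odd hk this]

lemma coeff_cothSeries_zero : coeff 0 cothSeries = -1 / 2 := by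
  rw [cothSeries, map_sub, coeff_C_mul, coeff_C_mul, coeff_X, bernoulliPowerSeries, coeff_mk]
  norm_num

lemma rzeta_eq_coeff (j : ℕ) (hj : j ≠ 0) :
    rzeta (2 * j) = (-1) ^ j * (2 * Real.pi) ^ (2 * j) * coeff (2 * j) cothSeries := by
  rw [rzeta, (hasSum_zeta_nat hj).tsum_eq, cothSeries, map_sub, coeff_C_mul, coeff_C_mul, coeff_X,
    if_neg (by omega), bernoulliPowerSeries, coeff_mk, mul_pow]
  have h : (2 : ℝ) ^ (2 * j) = 2 * 2 ^ (2 * j - 1) := by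
    rw [← pow_succ']; congr 1; omega
  rw [h]
  simp only [map_div₀, map_natCast, eq_ratCast, pow_succ]
  ring

lemma sum_range_even (u : ℕ → ℝ) (hu : ∀ k, Odd k → u k = 0) (n : ℕ) :
    ∑ i ∈ Finset.range (2 * n + 1), u i = ∑ j ∈ Finset.range (n + 1), u (2 * j) := by
  induction n with
  | zero => simp
  | succ n ih =>
    rw [show 2 * (n + 1) + 1 = 2 * n + 1 + 1 + 1 by ring, Finset.sum_range_succ,
      Finset.sum_range_succ, ih, hu _ ⟨n, rfl⟩, Finset.sum_range_succ _ (n + 1)]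
    ring_nf

/-- The coefficient of `t^{2n}` in `cothSeries_quintic`, for `n = m + 4`. -/
lemma coeff_identity (m : ℕ) :
    let f : ℕ → ℝ := fun j => coeff (2 * j) cothSeries
    let w : ℕ → ℝ := fun j => (2 * (j : ℝ) - 1) * (2 * (j : ℝ) - 2) * f j
    (2 * (m : ℝ) + 7) * (2 * m + 6) * (2 * m + 5) * (2 * m + 4) * (2 * m + 3) * f (m + 4)
      = 60 * (∑ j ∈ Finset.range (m + 5), w j * w (m + 4 - j)) + (2 * (m : ℝ) + 3) * f (m + 2) := by
  intro f w
  have h := congrArg (coeff (2 * (m + 4))) cothSeries_quintic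
  rw [map_add, coeff_C_mul, coeff_mul, Finset.Nat.sum_antidiagonal_eq_sum_range_succ_mk,
    sum_range_even, show 2 * (m + 4) = 2 * (m + 2) + 4 by ring, coeff_X_pow_mul] at h
  · simp only [coeff_shiftD] at h
    push_cast at h
    rw [show 2 * (m + 2) + 4 = 2 * (m + 4) by ring] at h
    have e : ∀ j ∈ Finset.range (m + 4 + 1), w j * w (m + 4 - j)
        = (2 * (j : ℝ) - 2) * ((2 * (j : ℝ) - 1) * coeff (2 * j) cothSeries)
          * ((((2 * (m + 4) - 2 * j : ℕ) : ℝ) - 2) * ((((2 * (m + 4) - 2 * j : ℕ) : ℝ) - 1)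
            * coeff (2 * (m + 4) - 2 * j) cothSeries)) := by
      intro j _
      rw [← Nat.mul_sub]
      push_cast
      simp only [w, f]
      ring
    rw [Finset.sum_congr rfl e]
    simp only [f]
    linear_combination h
  · intro k hk
    simp only [coeff_shiftD, coeff_cothSeries_odd k hk, mul_zero, zero_mul]

lemma zeta_convolution (n : ℕ) (hn : 4 ≤ n) :
    ∑ j ∈ Finset.Icc 2 (n - 2),
        ((j : ℝ) - 1) * (2 * (j : ℝ) - 1) * ((n : ℝ) - (j : ℝ) - 1)
          * (2 * (n : ℝ) - 2 * (j : ℝ) - 1) * (rzeta (2 * j) * rzeta (2 * n - 2 * j))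
      = ((2 * (n : ℝ) - 1) * (2 * n - 2) * (2 * n - 3) * (2 * n - 4) * (2 * n - 5) / 240
          + (2 * (n : ℝ) - 1) * (n - 1)) * rzeta (2 * n)
        - 6 * (2 * (n : ℝ) - 5) * rzeta 4 * rzeta (2 * n - 4) := by
  obtain ⟨m, rfl⟩ := Nat.exists_eq_add_of_le' hn
  have h := coeff_identity m
  simp only at h
  -- the terms `j = 1` and `j = n - 1` vanish; those with `j = 0` and `j = n` involve `ζ(0) = -1/2`
  rw [Finset.sum_range_succ, Finset.sum_range_succ, Finset.sum_range_succ',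
    Finset.sum_range_succ'] at h
  have hI : Finset.Icc 2 (m + 4 - 2) = Finset.Ico (0 + 2) (m + 1 + 2) := by
    ext j; simp only [Finset.mem_Icc, Finset.mem_Ico]; omega
  rw [hI, ← Finset.sum_Ico_add', ← Finset.range_eq_Ico]
  set K : ℝ := (-1) ^ (m + 4) * (2 * Real.pi) ^ (2 * (m + 4)) with hK
  have hz : rzeta (2 * (m + 4)) = K * coeff (2 * (m + 4)) cothSeries :=
    rzeta_eq_coeff _ (by omega)
  have h4 : rzeta 4 = Real.pi ^ 4 / 90 := hasSum_zeta_four.tsum_eq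
  have hz4 : 16 * Real.pi ^ 4 * rzeta (2 * (m + 4) - 4) = K * coeff (2 * (m + 2)) cothSeries := by
    rw [show 2 * (m + 4) - 4 = 2 * (m + 2) by omega, rzeta_eq_coeff _ (by omega), hK]
    ring
  have hS : ∀ j ∈ Finset.range (m + 1),
      (((j + 2 : ℕ) : ℝ) - 1) * (2 * ((j + 2 : ℕ) : ℝ) - 1)
          * (((m + 4 : ℕ) : ℝ) - ((j + 2 : ℕ) : ℝ) - 1)
          * (2 * ((m + 4 : ℕ) : ℝ) - 2 * ((j + 2 : ℕ) : ℝ) - 1)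
          * (rzeta (2 * (j + 2)) * rzeta (2 * (m + 4) - 2 * (j + 2)))
        = K / 4 * ((2 * ((j + 1 + 1 : ℕ) : ℝ) - 1) * (2 * ((j + 1 + 1 : ℕ) : ℝ) - 2)
            * coeff (2 * (j + 1 + 1)) cothSeries
          * ((2 * ((m + 4 - (j + 1 + 1) : ℕ) : ℝ) - 1)
            * (2 * ((m + 4 - (j + 1 + 1) : ℕ) : ℝ) - 2)
            * coeff (2 * (m + 4 - (j + 1 + 1))) cothSeries)) := by
    intro j hj
    obtain ⟨i, rfl⟩ := Nat.exists_eq_add_of_le' (Nat.lt_succ_iff.1 (Finset.mem_range.1 hj))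
    rw [show 2 * (i + j + 4) - 2 * (j + 2) = 2 * (i + 2) by omega,
      show i + j + 4 - (j + 1 + 1) = i + 2 by omega, rzeta_eq_coeff _ (by omega),
      rzeta_eq_coeff _ (by omega), hK]
    push_cast
    ring
  rw [Finset.sum_congr rfl hS, ← Finset.mul_sum, hz, h4]
  rw [show m + 4 - (m + 1 + 1 + 1) = 1 by omega, show m + 4 - (m + 4) = 0 by omega,
    show m + 4 - 0 = m + 4 by omega, coeff_cothSeries_zero] at h
  push_cast at h ⊢
  linear_combination (-K / 240) * h + (2 * (m : ℝ) + 3) / 240 * hz4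

/-- Closed form of the sum of the weights. The right-hand side is arranged as the coefficient of
`ζ(2n)` in `zeta_convolution` minus twice the coefficient of `ζ(2n)` in the value of the double
zeta sum. -/
lemma sum_weight (n : ℕ) (hn : 4 ≤ n) :
    ∑ j ∈ Finset.Icc 2 (n - 2),
        ((j : ℝ) - 1) * (2 * (j : ℝ) - 1) * ((n : ℝ) - (j : ℝ) - 1)
          * (2 * (n : ℝ) - 2 * (j : ℝ) - 1)
      = (2 * (n : ℝ) - 1) * (2 * n - 2) * (2 * n - 3) * (2 * n - 4) * (2 * n - 5) / 240
          + (2 * (n : ℝ) - 1) * (n - 1) - 3 / 4 * (n - 1) * (3 * n - 2) := by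
  obtain ⟨m, rfl⟩ := Nat.exists_eq_add_of_le' hn
  have hI : Finset.Icc 2 (m + 4 - 2) = Finset.Ico (0 + 2) (m + 1 + 2) := by
    ext j; simp only [Finset.mem_Icc, Finset.mem_Ico]; omega
  rw [hI, ← Finset.sum_Ico_add', ← Finset.range_eq_Ico]
  -- For the induction, `y = n - 3` is decoupled from the length `k` of the sum; the right-hand
  -- side comes from expanding the summand in powers of `j` and summing each power.
  have key : ∀ (y : ℝ) (k : ℕ), ∑ j ∈ Finset.range k,
      (((j + 2 : ℕ) : ℝ) - 1) * (2 * ((j + 2 : ℕ) : ℝ) - 1) * ((y + 3) - ((j + 2 : ℕ) : ℝ) - 1)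
          * (2 * (y + 3) - 2 * ((j + 2 : ℕ) : ℝ) - 1)
      = 4 * (((k : ℝ) - 1) * k * (2 * k - 1) * (3 * k ^ 2 - 3 * k - 1) / 30)
        + (8 - 8 * y) * ((k : ℝ) * (k - 1) / 2) ^ 2
        + (4 * y ^ 2 - 18 * y + 1) * (((k : ℝ) - 1) * k * (2 * k - 1) / 6)
        + (10 * y ^ 2 - 7 * y - 3) * ((k : ℝ) * (k - 1) / 2)
        + (6 * y ^ 2 + 3 * y) * k := by
    intro y k
    induction k with
    | zero => simp
    | succ k ih => rw [Finset.sum_range_succ, ih]; push_cast; ring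
  rw [show ((m + 4 : ℕ) : ℝ) = (m + 1 : ℝ) + 3 by push_cast; ring, key]
  push_cast
  ring

end EvenZeta

open EvenZeta

theorem stmt19 (n : ℕ) (hn : 4 ≤ n) :
    ∑ j ∈ Finset.Icc 2 (n - 2),
        ((j : ℝ) - 1) * (2 * (j : ℝ) - 1) * ((n : ℝ) - (j : ℝ) - 1)
          * (2 * (n : ℝ) - 2 * (j : ℝ) - 1) * dzeta (2 * j) (2 * n - 2 * j)
      = (3 / 8) * ((n : ℝ) - 1) * (3 * (n : ℝ) - 2) * rzeta (2 * n)
        - 3 * (2 * (n : ℝ) - 5) * rzeta 4 * rzeta (2 * n - 4) := by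
  set c : ℕ → ℝ := fun j => ((j : ℝ) - 1) * (2 * (j : ℝ) - 1) * ((n : ℝ) - (j : ℝ) - 1)
    * (2 * (n : ℝ) - 2 * (j : ℝ) - 1) with hc
  have hflip : ∑ j ∈ Finset.Icc 2 (n - 2), c j * dzeta (2 * j) (2 * n - 2 * j)
      = ∑ j ∈ Finset.Icc 2 (n - 2), c j * dzeta (2 * n - 2 * j) (2 * j) := by
    refine Finset.sum_nbij' (fun j => n - j) (fun j => n - j) ?_ ?_ ?_ ?_ ?_
    · intro j hj; simp only [Finset.mem_Icc] at hj ⊢; omega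
    · intro j hj; simp only [Finset.mem_Icc] at hj ⊢; omega
    · intro j hj; simp only [Finset.mem_Icc] at hj; omega
    · intro j hj; simp only [Finset.mem_Icc] at hj; omega
    · intro j hj
      simp only [Finset.mem_Icc] at hj
      rw [show 2 * n - 2 * (n - j) = 2 * j by omega, show 2 * (n - j) = 2 * n - 2 * j by omega, hc]
      simp only
      rw [Nat.cast_sub (show j ≤ n by omega)]
      ring
  have hst : ∑ j ∈ Finset.Icc 2 (n - 2), c j * dzeta (2 * j) (2 * n - 2 * j)
        + ∑ j ∈ Finset.Icc 2 (n - 2), c j * dzeta (2 * n - 2 * j) (2 * j)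
      = ∑ j ∈ Finset.Icc 2 (n - 2), c j * (rzeta (2 * j) * rzeta (2 * n - 2 * j))
        - (∑ j ∈ Finset.Icc 2 (n - 2), c j) * rzeta (2 * n) := by
    rw [← Finset.sum_add_distrib, Finset.sum_mul, ← Finset.sum_sub_distrib]
    refine Finset.sum_congr rfl fun j hj => ?_
    simp only [Finset.mem_Icc] at hj
    have := dzeta_stuffle (2 * j) (2 * n - 2 * j) (by omega) (by omega)
    rw [show 2 * j + (2 * n - 2 * j) = 2 * n by omega] at this
    linear_combination c j * this
  have hconv := zeta_convolution n hn
  have hw := sum_weight n hn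
  linear_combination hst / 2 + hflip / 2 + hconv / 2 - rzeta (2 * n) / 2 * hw
end
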